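/- arXiv:2509.16692 — 4 statements merged into one kernel-verified Lean document; each statement's English description precedes it below -/
import Mathlib

section
/- Let α ∈ (0,1), p ∈ [1,∞] and p' the conjugate exponent with 1/p + 1/p' = 1. There is a constant C = C(α,p) > 0 such that for all f, g ∈ C_c^∞(ℝ²) and each j ∈ {1,2}: |∫_{ℝ²} f ∂_j g dx| ≤ C (‖f‖_{L^p(ℝ²)} + sup_{h ≠ 0} |h|^{−α} ‖f(·+h) − f‖_{L^p(ℝ²)}) · (‖g‖_{L^{p'}(ℝ²)} + ∫_{ℝ²} |h|^{−(1−α)} ‖g(·+h) − g‖_{L^{p'}(ℝ²)} |h|^{−2} dh). -/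
open MeasureTheory Metric Filter Set Bornology
open scoped ENNReal NNReal Topology Real

noncomputable section

namespace Eikonal

/-! ### Basic geometric objects on `ℝ² ≃ ℂ` -/

/-- The point `e^{iθ}` of the unit circle, viewed as a complex number. -/
def circ (θ : ℝ) : ℂ := Complex.exp (θ * Complex.I)

/-- The real scalar product of `ℝ² ≃ ℂ`. -/
def dotR (z w : ℂ) : ℝ := z.re * w.re + z.im * w.im

/-- Smooth compactly supported test functions in the open set `Ω`. -/
def TestFun (Ω : Set ℂ) (ζ : ℂ → ℝ) : Prop :=
  ContDiff ℝ (⊤ : ℕ∞) ζ ∧ HasCompactSupport ζ ∧ tsupport ζ ⊆ Ω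

/-- `C¹` compactly supported test functions in `Ω`. -/
def TestFun1 (Ω : Set ℂ) (ζ : ℂ → ℝ) : Prop :=
  ContDiff ℝ 1 ζ ∧ HasCompactSupport ζ ∧ tsupport ζ ⊆ Ω

/-- `div m = 0` in the sense of distributions on `Ω`:
`∫_Ω m·∇ζ = 0` for all test functions `ζ`, where `m·∇ζ (x) = Dζ(x)[m x]`. -/
def DivFree (Ω : Set ℂ) (m : ℂ → ℂ) : Prop :=
  ∀ ζ : ℂ → ℝ, TestFun Ω ζ → (∫ x in Ω, fderiv ℝ ζ x (m x)) = 0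

/-- Weak solution of the eikonal equation on `Ω` : `|m| = 1` a.e. and `div m = 0` in `𝒟'(Ω)`. -/
def EikonalSol (Ω : Set ℂ) (m : ℂ → ℂ) : Prop :=
  AEStronglyMeasurable m (volume.restrict Ω) ∧
    (∀ᵐ x ∂(volume.restrict Ω), ‖m x‖ = 1) ∧ DivFree Ω m

/-! ### Besov seminorms (finite–difference characterization), with values in `ℝ≥0∞` -/

/-- The Besov seminorm `|m|_{B^s_{p,∞}(Ω)} = sup_{h ≠ 0} |h|^{-s} ‖m(·+h) - m‖_{L^p(Ω ∩ (Ω-h))}`. -/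
def besovE (Ω : Set ℂ) (p s : ℝ) (m : ℂ → ℂ) : ℝ≥0∞ :=
  ⨆ h : {h : ℂ // h ≠ 0},
    (‖h.1‖₊ : ℝ≥0∞) ^ (-s) *
      (∫⁻ x in Ω ∩ {x | x + h.1 ∈ Ω}, (‖m (x + h.1) - m x‖₊ : ℝ≥0∞) ^ p) ^ (1/p)

/-- The `L^p(Ω)` norm, with values in `ℝ≥0∞`. -/
def LpE (Ω : Set ℂ) (p : ℝ) (m : ℂ → ℂ) : ℝ≥0∞ :=
  (∫⁻ x in Ω, (‖m x‖₊ : ℝ≥0∞) ^ p) ^ (1/p)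

/-- The Besov norm `‖m‖_{B^s_{p,∞}(Ω)} = ‖m‖_{L^p(Ω)} + |m|_{B^s_{p,∞}(Ω)}`. -/
def besovNormE (Ω : Set ℂ) (p s : ℝ) (m : ℂ → ℂ) : ℝ≥0∞ := LpE Ω p m + besovE Ω p s m

/-! ### Entropies -/

/-- `Φ ∈ ENT`, recorded through the angular parametrization `θ ↦ Φ(e^{iθ})` together with its
derivative `φ'` : the derivative exists everywhere, is Lipschitz (i.e. `Φ ∈ C^{1,1}(S¹)`), and
satisfies the entropy condition `(d/dθ) Φ(e^{iθ}) · e^{iθ} = 0`. -/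
def IsEnt (Φ : ℂ → ℂ) (φ' : ℝ → ℂ) : Prop :=
  (∀ θ : ℝ, HasDerivAt (fun t => Φ (circ t)) (φ' θ) θ) ∧
    (∃ L : ℝ≥0, LipschitzWith L φ') ∧
    ∀ θ : ℝ, dotR (φ' θ) (circ θ) = 0

/-- `Φ ∈ ENT` with `‖Φ‖_{C^{1,1}} ≤ 1`. -/
def EntC11Ball (Φ : ℂ → ℂ) : Prop :=
  ∃ φ' : ℝ → ℂ, IsEnt Φ φ' ∧ (∀ θ, ‖Φ (circ θ)‖ ≤ 1) ∧ (∀ θ, ‖φ' θ‖ ≤ 1) ∧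
    LipschitzWith 1 φ'

/-- `Φ ∈ ENT` with `‖Φ‖_{C^{1,α}} ≤ 1`. -/
def EntC1aBall (α : ℝ) (Φ : ℂ → ℂ) : Prop :=
  ∃ φ' : ℝ → ℂ, IsEnt Φ φ' ∧ (∀ θ, ‖Φ (circ θ)‖ ≤ 1) ∧ (∀ θ, ‖φ' θ‖ ≤ 1) ∧
    ∀ θ₁ θ₂ : ℝ, ‖φ' θ₁ - φ' θ₂‖ ≤ |θ₁ - θ₂| ^ α

/-- `Φ ∈ ẼNT`: an entropy whose angular derivative is `π`-antiperiodic
(odd entropies plus constants). -/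
def EntTilde (Φ : ℂ → ℂ) : Prop :=
  ∃ φ' : ℝ → ℂ, IsEnt Φ φ' ∧ ∀ θ : ℝ, φ' (θ + π) = - φ' θ

/-- `Φ ∈ ẼNT` with `‖Φ‖_{C^{1,α}} ≤ 1`. -/
def EntTildeC1aBall (α : ℝ) (Φ : ℂ → ℂ) : Prop :=
  ∃ φ' : ℝ → ℂ, IsEnt Φ φ' ∧ (∀ θ, ‖Φ (circ θ)‖ ≤ 1) ∧ (∀ θ, ‖φ' θ‖ ≤ 1) ∧
    (∀ θ₁ θ₂ : ℝ, ‖φ' θ₁ - φ' θ₂‖ ≤ |θ₁ - θ₂| ^ α) ∧ ∀ θ : ℝ, φ' (θ + π) = - φ' θ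

/-! ### Entropy productions as measures -/

/-- Integral of a function against a signed measure. -/
def sInt {X : Type*} [MeasurableSpace X] (σ : MeasureTheory.SignedMeasure X) (f : X → ℝ) : ℝ :=
  (∫ x, f x ∂σ.toJordanDecomposition.posPart) - ∫ x, f x ∂σ.toJordanDecomposition.negPart

/-- The (finite Radon) signed measure `μ` represents the distribution
`div Φ(m) : ζ ↦ -∫_Ω Φ(m)·∇ζ`. -/
def RepresentsDiv (Ω : Set ℂ) (m Φ : ℂ → ℂ) (μ : MeasureTheory.SignedMeasure ℂ) : Prop :=
  ∀ ζ : ℂ → ℝ, TestFun Ω ζ → -(∫ x in Ω, fderiv ℝ ζ x (Φ (m x))) = sInt μ ζ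

/-- The supremum measure `ν = ⋁ {|div Φ(m)| : Φ ∈ ENT, ‖Φ‖_{C^{1,1}} ≤ 1}`. -/
def entVarC11 (Ω : Set ℂ) (m : ℂ → ℂ) : Measure ℂ :=
  ⨆ Φ : {Φ : ℂ → ℂ // EntC11Ball Φ},
    ⨆ μ : {μ : MeasureTheory.SignedMeasure ℂ // RepresentsDiv Ω m Φ.1 μ}, μ.1.totalVariation

/-- The supremum measure `⋁ {|div Φ(m)| : Φ ∈ ENT, ‖Φ‖_{C^{1,α}} ≤ 1}`. -/
def entVarC1a (α : ℝ) (Ω : Set ℂ) (m : ℂ → ℂ) : Measure ℂ :=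
  ⨆ Φ : {Φ : ℂ → ℂ // EntC1aBall α Φ},
    ⨆ μ : {μ : MeasureTheory.SignedMeasure ℂ // RepresentsDiv Ω m Φ.1 μ}, μ.1.totalVariation

/-- The supremum measure `⋁ {|div Φ(m)| : Φ ∈ ẼNT, ‖Φ‖_{C^{1,α}} ≤ 1}`. -/
def entVarTildeC1a (α : ℝ) (Ω : Set ℂ) (m : ℂ → ℂ) : Measure ℂ :=
  ⨆ Φ : {Φ : ℂ → ℂ // EntTildeC1aBall α Φ},
    ⨆ μ : {μ : MeasureTheory.SignedMeasure ℂ // RepresentsDiv Ω m Φ.1 μ}, μ.1.totalVariation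

/-- The jump set `J_m = {x ∈ Ω : limsup_{r→0} ν(B_r(x))/r > 0}`. -/
def jumpSet (Ω : Set ℂ) (m : ℂ → ℂ) : Set ℂ :=
  {x ∈ Ω | 0 < Filter.limsup
    (fun r : ℝ => entVarC11 Ω m (Metric.ball x r) / ENNReal.ofReal r) (𝓝[>] (0:ℝ))}

/-- A set `J ⊆ ℂ` is (countably) `1`-rectifiable: up to an `H¹`-null set it is covered by
countably many Lipschitz images of `ℝ`. -/
def Rect1 (J : Set ℂ) : Prop :=
  ∃ (f : ℕ → ℝ → ℂ) (K : ℕ → ℝ≥0), (∀ n, LipschitzWith (K n) (f n)) ∧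
    μH[1] (J \ ⋃ n, Set.range (f n)) = 0

/-- `n, m⁺, m⁻` are a measure-theoretic unit normal and one-sided `L¹` traces of `m`
at `H¹`-a.e. point of the jump set `J_m`. -/
def TraceData (Ω : Set ℂ) (m n mp mm : ℂ → ℂ) : Prop :=
  ∀ᵐ x ∂((μH[1] : Measure ℂ).restrict (jumpSet Ω m)),
    ‖n x‖ = 1 ∧ ‖mp x‖ = 1 ∧ ‖mm x‖ = 1 ∧
    Filter.Tendsto
      (fun r : ℝ => (∫ y in Metric.ball x r ∩ {y | 0 < dotR (y - x) (n x)}, ‖m y - mp x‖) / r^2)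
      (𝓝[>] (0:ℝ)) (𝓝 0) ∧
    Filter.Tendsto
      (fun r : ℝ => (∫ y in Metric.ball x r ∩ {y | dotR (y - x) (n x) < 0}, ‖m y - mm x‖) / r^2)
      (𝓝[>] (0:ℝ)) (𝓝 0)

/-- The subset `J_m^δ ⊆ J_m` of jumps of (angular) amplitude larger than `δ`, defined through
trace functions `m⁺ = mp`, `m⁻ = mm`. -/
def Jdelta (Ω : Set ℂ) (m mp mm : ℂ → ℂ) (δ : ℝ) : Set ℂ :=
  {x ∈ jumpSet Ω m | δ < Real.arccos (dotR (mp x) (mm x))}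

/-! ### Mollifiers -/

/-- A mollifier: `ρ ∈ C_c¹(B₁)`, `ρ ≥ 0`, `∫ ρ = 1`, `|∇ρ| ≤ 2`. -/
def Mollifier (ρ : ℂ → ℝ) : Prop :=
  ContDiff ℝ 1 ρ ∧ HasCompactSupport ρ ∧ tsupport ρ ⊆ Metric.ball 0 1 ∧
    (∀ x, 0 ≤ ρ x) ∧ (∫ x, ρ x) = 1 ∧ ∀ x, ‖fderiv ℝ ρ x‖ ≤ 2

/-- The mollification `m_ε = m * ρ_ε`, where `ρ_ε(y) = ε⁻² ρ(y/ε)`. -/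
def mollify (ρ : ℂ → ℝ) (ε : ℝ) (m : ℂ → ℂ) (x : ℂ) : ℂ :=
  ∫ y, ((ε^2)⁻¹ * ρ (ε⁻¹ • y)) • m (x - y)

/-! ### The kinetic formulation -/

/-- `χ(x,s) = 1` if `e^{is}·m(x) > 0` and `0` otherwise. -/
def chi (m : ℂ → ℂ) (x : ℂ) (s : ℝ) : ℝ := if 0 < dotR (circ s) (m x) then 1 else 0

/-- Test functions for the kinetic equation on `Ω × 𝕋` (`𝕋 = ℝ/2πℤ`): smooth, `2π`-periodic in
the kinetic variable, compactly supported inside `Ω` in the space variable. -/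
def KineticTest (Ω : Set ℂ) (φ : ℂ → ℝ → ℝ) : Prop :=
  ContDiff ℝ (⊤ : ℕ∞) (fun p : ℂ × ℝ => φ p.1 p.2) ∧ (∀ x s, φ x (s + 2*π) = φ x s) ∧
    ∃ K : Set ℂ, IsCompact K ∧ K ⊆ Ω ∧ ∀ x ∉ K, ∀ s, φ x s = 0

/-- `σ` is a kinetic measure for `m` : it is a finite signed (Radon) measure on `Ω × 𝕋`
(realized as `Ω × [0,2π)`) such that `e^{is}·∇ₓχ = ∂ₛσ` in `𝒟'(Ω × 𝕋)`. -/
def IsKineticMeasure (Ω : Set ℂ) (m : ℂ → ℂ) (σ : MeasureTheory.SignedMeasure (ℂ × ℝ)) : Prop :=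
  σ.totalVariation (Ω ×ˢ Set.Ico 0 (2*π))ᶜ = 0 ∧
    ∀ φ : ℂ → ℝ → ℝ, KineticTest Ω φ →
      (∫ x in Ω, ∫ s in Set.Ico 0 (2*π), chi m x s * fderiv ℝ (fun y => φ y s) x (circ s))
        = - sInt σ (fun p => deriv (fun s => φ p.1 s) p.2)

/-- `σ` is the kinetic measure of minimal total variation. -/
def IsMinKinetic (Ω : Set ℂ) (m : ℂ → ℂ) (σ : MeasureTheory.SignedMeasure (ℂ × ℝ)) : Prop :=
  IsKineticMeasure Ω m σ ∧
    ∀ σ' : MeasureTheory.SignedMeasure (ℂ × ℝ), IsKineticMeasure Ω m σ' →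
      σ.totalVariation Set.univ ≤ σ'.totalVariation Set.univ

/-- `ν_min = (p_x)_♯ |σ_min|`. -/
def nuMin (σ : MeasureTheory.SignedMeasure (ℂ × ℝ)) : Measure ℂ :=
  σ.totalVariation.map Prod.fst

/-- The entropy `Φ_ψ(z) = ∫_𝕋 1_{e^{is}·z>0} ψ(s) e^{is} ds` associated with `ψ : 𝕋 → ℝ`. -/
def PhiPsi (ψ : ℝ → ℝ) (z : ℂ) : ℂ :=
  ∫ s in Set.Ico 0 (2*π), {s' : ℝ | 0 < dotR (circ s') z}.indicator (fun s' => ψ s' • circ s') s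

/-! ### Lagrangian representations -/

/-- A (candidate) Lagrangian trajectory: a time interval `(tm, tp)`, a spatial component `x`,
a lifted angular component `s`, and the derivative measure `Ds` of `s`. -/
structure Curve where
  tm : ℝ
  tp : ℝ
  x : ℝ → ℂ
  s : ℝ → ℝ
  Ds : MeasureTheory.SignedMeasure ℝ

instance : MeasurableSpace Curve := ⊤

/-- The open time interval of a curve. -/
def Curve.I (γ : Curve) : Set ℝ := Set.Ioo γ.tm γ.tp

/-- A curve is admissible: `0 ≤ tm ≤ tp ≤ T`, `γ_x` Lipschitz with values in `Ω̄`, `γ_s`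
right-continuous of bounded variation with derivative measure `Ds` carried by the time interval. -/
def Curve.Valid (T : ℝ) (Ω : Set ℂ) (γ : Curve) : Prop :=
  0 ≤ γ.tm ∧ γ.tm ≤ γ.tp ∧ γ.tp ≤ T ∧
    (∃ L : ℝ≥0, LipschitzOnWith L γ.x (Set.Icc γ.tm γ.tp)) ∧
    (∀ t ∈ Set.Icc γ.tm γ.tp, γ.x t ∈ closure Ω) ∧
    (∀ t ∈ γ.I, Filter.Tendsto γ.s (𝓝[>] t) (𝓝 (γ.s t))) ∧
    (∀ a ∈ γ.I, ∀ b ∈ γ.I, a ≤ b → γ.s b - γ.s a = γ.Ds (Set.Ioc a b)) ∧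
    γ.Ds.totalVariation γ.Iᶜ = 0

/-- Reduction mod `2π` to `[0, 2π)`. -/
def wrap (s : ℝ) : ℝ := s - 2*π*(⌊s/(2*π)⌋ : ℝ)

/-- The set of atoms of a signed measure on `ℝ`. -/
def atomSet (μ : MeasureTheory.SignedMeasure ℝ) : Set ℝ := {t | μ.totalVariation {t} ≠ 0}

/-- `|D^j v|`: the jump (atomic) part of the total variation of a derivative measure. -/
def jumpTV (μ : MeasureTheory.SignedMeasure ℝ) : Measure ℝ :=
  μ.totalVariation.restrict (atomSet μ)

/-- `|D̃ v|`: the diffuse (continuous) part of the total variation of a derivative measure. -/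
def diffTV (μ : MeasureTheory.SignedMeasure ℝ) : Measure ℝ :=
  μ.totalVariation.restrict (atomSet μ)ᶜ

/-- `ω` is a Lagrangian representation of `m` on `[0,T]`. -/
def IsLagRep (T : ℝ) (Ω : Set ℂ) (m : ℂ → ℂ) (ω : Measure Curve) : Prop :=
  (∀ᵐ γ ∂ω, γ.Valid T Ω) ∧
  (∀ t ∈ Set.Ioo (0:ℝ) T,
    Measure.map (fun γ : Curve => (γ.x t, wrap (γ.s t))) (ω.restrict {γ : Curve | t ∈ γ.I})
      = ((volume.restrict Ω).prod (volume.restrict (Set.Ico 0 (2*π)))).restrict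
          {p : ℂ × ℝ | 0 < dotR (circ p.2) (m p.1)}) ∧
  (∀ᵐ γ ∂ω, ∀ᵐ t ∂(volume.restrict γ.I), HasDerivAt γ.x (circ (γ.s t)) t) ∧
  (∫⁻ γ, γ.Ds.totalVariation Set.univ ∂ω) < ⊤ ∧
  (∀ᵐ γ ∂ω, (0 < γ.tm → γ.x γ.tm ∈ frontier Ω) ∧ (γ.tp < T → γ.x γ.tp ∈ frontier Ω))

/-- `ω` is a minimal Lagrangian representation of `m`, relative to the minimal kinetic
measure `σmin`. -/
def IsMinLagRep (T : ℝ) (Ω : Set ℂ) (m : ℂ → ℂ) (σmin : MeasureTheory.SignedMeasure (ℂ × ℝ))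
    (ω : Measure Curve) : Prop :=
  IsLagRep T Ω m ω ∧
    (∫⁻ γ, γ.Ds.totalVariation Set.univ ∂ω) = ENNReal.ofReal T * σmin.totalVariation Set.univ

/-- A bounded open set of class `C^{1,1}`: near each boundary point, `Ω` is the subgraph of a
`C^{1,1}` function in a suitable orthonormal frame. -/
def C11Domain (Ω : Set ℂ) : Prop :=
  ∀ z ∈ frontier Ω, ∃ (e : ℂ) (r : ℝ) (f f' : ℝ → ℝ) (L : ℝ≥0),
    0 < r ∧ ‖e‖ = 1 ∧ (∀ t, HasDerivAt f (f' t) t) ∧ LipschitzWith L f' ∧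
    ∀ y ∈ Metric.ball z r, (y ∈ Ω ↔ dotR (y - z) e < f (dotR (y - z) (Complex.I * e)))

/-- `x` is a Lebesgue point of `f` with value `c`, with respect to the measure `ρ`. -/
def LebesguePtVal (ρ : Measure ℂ) (f : ℂ → ℝ) (x : ℂ) (c : ℝ) : Prop :=
  f x = c ∧
    Filter.Tendsto
      (fun r : ℝ => (∫⁻ y in Metric.ball x r, ENNReal.ofReal |f y - c| ∂ρ) / ρ (Metric.ball x r))
      (𝓝[>] (0:ℝ)) (𝓝 0)


lemma holder_aux (p q : ℝ≥0∞) (hpq : p⁻¹ + q⁻¹ = 1) (a b : ℂ → ℝ) (ha : Continuous a)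
    (hb : Continuous b) :
    ENNReal.ofReal |∫ x, a x * b x| ≤ eLpNorm a p volume * eLpNorm b q volume := by
  have : ENNReal.HolderConjugate p q := ENNReal.holderConjugate_iff.2 hpq
  have h1 : ENNReal.ofReal |∫ x, a x * b x| = ‖∫ x, a x * b x‖ₑ := by
    rw [← Real.norm_eq_abs, ofReal_norm]
  rw [h1]
  refine (enorm_integral_le_lintegral_enorm _).trans ?_
  rw [← eLpNorm_one_eq_lintegral_enorm]
  have h2 := eLpNorm_smul_le_mul_eLpNorm (p := p) (q := q) (r := 1) (μ := (volume : Measure ℂ))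
    hb.aestronglyMeasurable ha.aestronglyMeasurable
  have h3 : (fun x => a x * b x) = a • b := by ext x; simp
  rw [h3]
  exact h2

lemma trans_aux (q : ℝ≥0∞) (g : ℂ → ℝ) (hg : Continuous g) (h : ℂ) :
    eLpNorm (fun x => g (x + h)) q volume = eLpNorm g q volume :=
  eLpNorm_comp_measurePreserving hg.aestronglyMeasurable (measurePreserving_add_right volume h)

lemma om_sub (q : ℝ≥0∞) (hq : 1 ≤ q) (g : ℂ → ℝ) (hg : Continuous g) (h k : ℂ) :
    eLpNorm (fun x => g (x + (h + k)) - g x) q volume ≤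
      eLpNorm (fun x => g (x + h) - g x) q volume + eLpNorm (fun x => g (x + k) - g x) q volume := by
  have e : (fun x => g (x + (h + k)) - g x) =
      (fun x => g ((x + k) + h) - g (x + k)) + (fun x => g (x + k) - g x) := by
    ext x
    have : x + (h + k) = x + k + h := by ring
    simp [this]
  rw [e]
  refine (eLpNorm_add_le (by fun_prop) (by fun_prop) hq).trans ?_
  rw [trans_aux q (fun y => g (y + h) - g y) (by fun_prop) k]

lemma om_meas (q : ℝ≥0∞) (g : ℂ → ℝ) (hg : Continuous g) :
    Measurable (fun h : ℂ => eLpNorm (fun x => g (x + h) - g x) q volume) := by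
  apply measurable_of_Iic
  intro C
  apply IsClosed.measurableSet
  apply IsSeqClosed.isClosed
  intro u h hu hlim
  simp only [mem_preimage, mem_Iic] at hu ⊢
  refine (Lp.eLpNorm_lim_le_liminf_eLpNorm (f := fun n x => g (x + u n) - g x)
    (fun n => by fun_prop) _ (ae_of_all _ fun x => ?_)).trans ?_
  · exact ((hg.tendsto _).comp (tendsto_const_nhds.add hlim)).sub tendsto_const_nhds
  · refine liminf_le_of_le (by isBoundedDefault) (fun b hb => ?_)
    obtain ⟨n, hn⟩ := hb.exists
    exact hn.trans (hu n)

/-- averaging bound -/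
lemma om_avg (q : ℝ≥0∞) (hq : 1 ≤ q) (g : ℂ → ℝ) (hg : Continuous g) (s : ℂ) (r : ℝ) :
    eLpNorm (fun x => g (x + s) - g x) q volume * volume (ball (s / 2) r) ≤
      2 * ∫⁻ h in ball (s / 2) r, eLpNorm (fun x => g (x + h) - g x) q volume := by
  have hm := om_meas q g hg
  set ω : ℂ → ℝ≥0∞ := fun h => eLpNorm (fun x => g (x + h) - g x) q volume with hω
  have hpre : (fun h : ℂ => s - h) ⁻¹' ball (s / 2) r = ball (s / 2) r := by
    ext h
    simp only [mem_preimage, mem_ball, dist_eq_norm]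
    rw [show s - h - s / 2 = -(h - s / 2) by ring, norm_neg]
  have h2 : ∫⁻ h in ball (s / 2) r, ω (s - h) = ∫⁻ h in ball (s / 2) r, ω h := by
    have := (Measure.measurePreserving_sub_left (volume : Measure ℂ) s).setLIntegral_comp_preimage
      (s := ball (s / 2) r) measurableSet_ball hm
    rw [hpre] at this
    exact this
  calc ω s * volume (ball (s / 2) r) = ∫⁻ h in ball (s / 2) r, ω s := by simp
    _ ≤ ∫⁻ h in ball (s / 2) r, (ω h + ω (s - h)) := by
        refine lintegral_mono fun h => ?_
        have := om_sub q hq g hg h (s - h)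
        rw [add_sub_cancel] at this
        exact this
    _ = _ := by rw [lintegral_add_left hm, h2, two_mul]

lemma lim_aux (f g : ℂ → ℝ) (hf : Continuous f) (hfc : HasCompactSupport f)
    (hg : ContDiff ℝ (⊤ : ℕ∞) g) (hgc : HasCompactSupport g) (v : ℂ) :
    Tendsto (fun n : ℕ => ∫ x, f x * ((2:ℝ) ^ n * (g (x + ((2:ℝ) ^ n)⁻¹ • v) - g x))) atTop
      (𝓝 (∫ x, f x * fderiv ℝ g x v)) := by
  obtain ⟨L, hL⟩ := hg.lipschitzWith_of_hasCompactSupport hgc (by simp)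
  have hgcont := hg.continuous
  refine tendsto_integral_of_dominated_convergence (fun x => ‖f x‖ * (L * ‖v‖)) ?_ ?_ ?_ ?_
  · intro n
    exact Continuous.aestronglyMeasurable (by fun_prop)
  · exact ((hf.integrable_of_hasCompactSupport hfc).norm).mul_const _
  · intro n
    refine ae_of_all _ fun x => ?_
    rw [norm_mul, norm_mul]
    refine mul_le_mul_of_nonneg_left ?_ (norm_nonneg _)
    have h1 := hL.dist_le_mul (x + ((2:ℝ) ^ n)⁻¹ • v) x
    rw [dist_eq_norm, dist_eq_norm, add_sub_cancel_left, norm_smul] at h1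
    have h2 : ‖(2:ℝ)^n‖ = 2^n := by simp
    rw [norm_inv, h2] at h1
    rw [h2]
    calc (2:ℝ)^n * ‖g (x + ((2:ℝ) ^ n)⁻¹ • v) - g x‖ ≤ 2^n * (L * ((2 ^ n)⁻¹ * ‖v‖)) := by gcongr
      _ = L * ‖v‖ := by field_simp
  · refine ae_of_all _ fun x => ?_
    refine Tendsto.const_mul _ ?_
    have := ((hg.differentiable (by simp)).differentiableAt (x := x)).hasFDerivAt.lim_real v
    exact this.comp (tendsto_pow_atTop_atTop_of_one_lt (by norm_num : (1:ℝ) < 2))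

lemma step_aux (f g : ℂ → ℝ) (hf : Continuous f) (hfc : HasCompactSupport f)
    (hg : Continuous g) (s : ℂ) (c : ℝ) :
    (∫ x, f x * (2 * c * (g (x + s) - g x))) - (∫ x, f x * (c * (g (x + (s + s)) - g x)))
      = - c * ∫ x, (f (x + (-s)) - f x) * (g (x + s) - g x) := by
  have hi : ∀ k : ℂ → ℝ, Continuous k → Integrable (fun x => f x * k x) := fun k hk =>
    (hf.mul hk).integrable_of_hasCompactSupport hfc.mul_right
  rw [← integral_sub (hi _ (by fun_prop)) (hi _ (by fun_prop))]
  have e1 : ∫ x, f x * (g (x + (s + s)) - g (x + s)) = ∫ x, f (x + (-s)) * (g (x + s) - g x) := by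
    rw [← integral_add_right_eq_self (fun x => f (x + (-s)) * (g (x + s) - g x)) s]
    simp [add_assoc]
  have hi2 : Integrable (fun x => f (x + (-s)) * (g (x + s) - g x)) := by
    refine Continuous.integrable_of_hasCompactSupport (by fun_prop) ?_
    exact HasCompactSupport.mul_right (hfc.comp_homeomorph (Homeomorph.addRight (-s)))
  have e2 : ∫ x, (f (x + (-s)) - f x) * (g (x + s) - g x) =
      (∫ x, f x * (g (x + (s + s)) - g (x + s))) - ∫ x, f x * (g (x + s) - g x) := by
    rw [e1, ← integral_sub hi2 (hi _ (by fun_prop))]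
    congr 1; ext x; ring
  rw [e2, ← integral_sub (hi _ (by fun_prop)) (hi _ (by fun_prop)), ← integral_const_mul]
  congr 1; ext x; ring

lemma vol_aux (c : ℂ) (r : ℝ) (hr : 0 ≤ r) :
    ENNReal.ofReal r ^ 2 ≤ 36 * volume (ball c (r / 6)) := by
  rw [Complex.volume_ball]
  have h1 : ENNReal.ofReal (r / 6) = ENNReal.ofReal r / 6 := by
    rw [ENNReal.ofReal_div_of_pos (by norm_num)]; simp
  have h2 : (1 : ℝ≥0∞) ≤ (NNReal.pi : ℝ≥0∞) := by
    have : (1 : ℝ≥0) ≤ NNReal.pi := by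
      rw [← NNReal.coe_le_coe]
      simpa using by linarith [Real.pi_gt_three]
    exact_mod_cast this
  have h3 : (36 : ℝ≥0∞) * (ENNReal.ofReal r / 6) ^ 2 = ENNReal.ofReal r ^ 2 := by
    rw [show (36 : ℝ≥0∞) = 6 ^ 2 by norm_num, ← mul_pow,
      ENNReal.mul_div_cancel (by norm_num) (by norm_num)]
  rw [h1, ← mul_assoc, h3]
  exact le_mul_of_one_le_right' h2

lemma step_bound (α : ℝ) (hα : α ∈ Set.Ioo (0:ℝ) 1) (p q : ℝ≥0∞) (hq : 1 ≤ q)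
    (hpq : p⁻¹ + q⁻¹ = 1) (f g : ℂ → ℝ) (hf : Continuous f) (hg : Continuous g) (s : ℂ)
    (hs : s ≠ 0) (c : ℝ) (hc0 : 0 ≤ c) (hc : c ≤ ‖s‖⁻¹) :
    ENNReal.ofReal |(- c * ∫ x, (f (x + (-s)) - f x) * (g (x + s) - g x))| ≤
      72 * ((⨆ h : {h : ℂ // h ≠ 0}, (‖h.1‖₊ : ℝ≥0∞) ^ (-α) *
                eLpNorm (fun x => f (x + h.1) - f x) p volume) *
        ∫⁻ h in ball (s / 2) (‖s‖ / 6), (‖h‖₊ : ℝ≥0∞) ^ (-(1-α)) *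
                eLpNorm (fun x => g (x + h) - g x) q volume * (‖h‖₊ : ℝ≥0∞) ^ (-(2:ℝ))) := by
  have hs' : 0 < ‖s‖ := norm_pos_iff.2 hs
  set A : ℝ≥0∞ := ⨆ h : {h : ℂ // h ≠ 0}, (‖h.1‖₊ : ℝ≥0∞) ^ (-α) *
                eLpNorm (fun x => f (x + h.1) - f x) p volume with hA
  have hm := om_meas q g hg
  have hav := om_avg q hq g hg s (‖s‖ / 6)
  set ω : ℂ → ℝ≥0∞ := fun h => eLpNorm (fun x => g (x + h) - g x) q volume with hω
  set R : ℝ≥0∞ := (‖s‖₊ : ℝ≥0∞) with hR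
  have hR0 : R ≠ 0 := by simpa [hR] using hs
  have hRt : R ≠ ⊤ := ENNReal.coe_ne_top
  have hRr : ENNReal.ofReal ‖s‖ = R := by rw [ofReal_norm]; rfl
  set J : ℝ≥0∞ := ∫⁻ h in ball (s / 2) (‖s‖ / 6), ω h with hJ
  -- pieces
  have b1 : ENNReal.ofReal c ≤ R ^ (-1 : ℝ) := by
    rw [ENNReal.rpow_neg_one, ← hRr, ← ENNReal.ofReal_inv_of_pos hs']
    exact ENNReal.ofReal_le_ofReal hc
  have b2 : eLpNorm (fun x => f (x + (-s)) - f x) p volume ≤ R ^ α * A := by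
    have h1 : R ^ (-α) * eLpNorm (fun x => f (x + (-s)) - f x) p volume ≤ A := by
      have := le_iSup (fun h : {h : ℂ // h ≠ 0} => (‖h.1‖₊ : ℝ≥0∞) ^ (-α) *
                eLpNorm (fun x => f (x + h.1) - f x) p volume) ⟨-s, neg_ne_zero.2 hs⟩
      simpa [hR] using this
    calc eLpNorm (fun x => f (x + (-s)) - f x) p volume
        = R ^ α * (R ^ (-α) * eLpNorm (fun x => f (x + (-s)) - f x) p volume) := by
          rw [← mul_assoc, ← ENNReal.rpow_add _ _ hR0 hRt]; simp
      _ ≤ R ^ α * A := by gcongr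
  have b3 : ω s ≤ 72 * (R ^ (-(2:ℝ)) * J) := by
    have h1 : R ^ (2:ℝ) * ω s ≤ 72 * J := by
      calc R ^ (2:ℝ) * ω s = ENNReal.ofReal ‖s‖ ^ 2 * ω s := by rw [hRr, ENNReal.rpow_ofNat]
        _ ≤ 36 * volume (ball (s / 2) (‖s‖ / 6)) * ω s := by
          gcongr; exact vol_aux _ _ hs'.le
        _ = 36 * (ω s * volume (ball (s / 2) (‖s‖ / 6))) := by ring
        _ ≤ 36 * (2 * J) := by gcongr
        _ = 72 * J := by ring
    calc ω s = R ^ (-(2:ℝ)) * (R ^ (2:ℝ) * ω s) := by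
          rw [← mul_assoc, ← ENNReal.rpow_add _ _ hR0 hRt]; simp
      _ ≤ R ^ (-(2:ℝ)) * (72 * J) := by gcongr
      _ = _ := by ring
  have b4 : R ^ (-(1-α)) * R ^ (-(2:ℝ)) * J ≤ ∫⁻ h in ball (s / 2) (‖s‖ / 6),
      (‖h‖₊ : ℝ≥0∞) ^ (-(1-α)) * ω h * (‖h‖₊ : ℝ≥0∞) ^ (-(2:ℝ)) := by
    rw [hJ, ← lintegral_const_mul _ hm]
    refine setLIntegral_mono' measurableSet_ball fun h hh => ?_
    have hle : (‖h‖₊ : ℝ≥0∞) ≤ R := by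
      rw [mem_ball, dist_eq_norm] at hh
      have h1 : ‖h‖ ≤ ‖s‖ := by
        calc ‖h‖ = ‖(h - s / 2) + s / 2‖ := by simp
          _ ≤ ‖h - s / 2‖ + ‖s / 2‖ := norm_add_le _ _
          _ ≤ ‖s‖ := by
            have : ‖s / 2‖ = ‖s‖ / 2 := by simp
            rw [this]; linarith
      exact ENNReal.coe_le_coe.2 h1
    have k1 : R ^ (-(1-α)) ≤ (‖h‖₊ : ℝ≥0∞) ^ (-(1-α)) := by
      rw [ENNReal.rpow_neg, ENNReal.rpow_neg, ENNReal.inv_le_inv]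
      exact ENNReal.rpow_le_rpow hle (by linarith [hα.2])
    have k2 : R ^ (-(2:ℝ)) ≤ (‖h‖₊ : ℝ≥0∞) ^ (-(2:ℝ)) := by
      rw [ENNReal.rpow_neg, ENNReal.rpow_neg, ENNReal.inv_le_inv]
      exact ENNReal.rpow_le_rpow hle (by norm_num)
    calc R ^ (-(1-α)) * R ^ (-(2:ℝ)) * ω h = R ^ (-(1-α)) * ω h * R ^ (-(2:ℝ)) := by ring
      _ ≤ _ := by gcongr
  have e : R ^ (-(1-α)) = R ^ (-1 : ℝ) * R ^ α := by
    rw [← ENNReal.rpow_add _ _ hR0 hRt]; congr 1; ring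
  calc _ = ENNReal.ofReal c *
        ENNReal.ofReal |∫ x, (f (x + (-s)) - f x) * (g (x + s) - g x)| := by
        rw [abs_mul, abs_neg, abs_of_nonneg hc0, ENNReal.ofReal_mul hc0]
    _ ≤ ENNReal.ofReal c * (eLpNorm (fun x => f (x + (-s)) - f x) p volume * ω s) := by
        gcongr
        exact holder_aux p q hpq _ _ (by fun_prop) (by fun_prop)
    _ ≤ R ^ (-1 : ℝ) * ((R ^ α * A) * (72 * (R ^ (-(2:ℝ)) * J))) := by gcongr
    _ = 72 * (A * (R ^ (-(1-α)) * R ^ (-(2:ℝ)) * J)) := by rw [e]; ring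
    _ ≤ _ := by gcongr

lemma disj_aux (v : ℂ) (hv : ‖v‖ = 1) :
    Pairwise (Function.onFun Disjoint (fun n : ℕ =>
      ball ((((2:ℝ) ^ (n + 1))⁻¹ • v) / 2) (‖((2:ℝ) ^ (n + 1))⁻¹ • v‖ / 6))) := by
  have key : ∀ n : ℕ, ∀ h ∈ ball ((((2:ℝ) ^ (n + 1))⁻¹ • v) / 2)
      (‖((2:ℝ) ^ (n + 1))⁻¹ • v‖ / 6),
      ((2:ℝ) ^ (n + 1))⁻¹ / 3 < ‖h‖ ∧ ‖h‖ < ((2:ℝ) ^ (n + 1))⁻¹ * (2 / 3) := by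
    intro n h hh
    have hn : ‖((2:ℝ) ^ (n + 1))⁻¹ • v‖ = ((2:ℝ) ^ (n + 1))⁻¹ := by
      rw [norm_smul, hv]; simp
    set s : ℂ := ((2:ℝ) ^ (n + 1))⁻¹ • v
    rw [mem_ball, dist_eq_norm] at hh
    have h2 : ‖s / 2‖ = ‖s‖ / 2 := by simp
    have h3 : ‖h‖ ≤ ‖h - s / 2‖ + ‖s / 2‖ := by
      simpa using norm_add_le (h - s / 2) (s / 2)
    have h4 : ‖s / 2‖ - ‖h‖ ≤ ‖h - s / 2‖ := by
      rw [norm_sub_rev]; exact norm_sub_norm_le _ _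
    rw [← hn]
    constructor <;> linarith
  have main : ∀ m n : ℕ, m < n → Disjoint
      (ball ((((2:ℝ) ^ (m + 1))⁻¹ • v) / 2) (‖((2:ℝ) ^ (m + 1))⁻¹ • v‖ / 6))
      (ball ((((2:ℝ) ^ (n + 1))⁻¹ • v) / 2) (‖((2:ℝ) ^ (n + 1))⁻¹ • v‖ / 6)) := by
    intro m n hmn
    rw [Set.disjoint_left]
    intro h h1 h2
    have k1 := (key m h h1).1
    have k2 := (key n h h2).2
    have k3 : (2:ℝ) * (2:ℝ) ^ (m + 1) ≤ (2:ℝ) ^ (n + 1) := by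
      rw [← pow_succ']
      exact pow_le_pow_right₀ (by norm_num) (by omega)
    have k4 : ((2:ℝ) ^ (n + 1))⁻¹ ≤ (2 * (2:ℝ) ^ (m + 1))⁻¹ :=
      inv_anti₀ (by positivity) k3
    rw [mul_inv] at k4
    linarith
  intro m n hmn
  rcases lt_or_gt_of_ne hmn with h | h
  · exact main m n h
  · exact (main n m h).symm

theorem core (α : ℝ) (hα : α ∈ Set.Ioo (0:ℝ) 1)
    (p q : ℝ≥0∞) (hq : 1 ≤ q) (hpq : p⁻¹ + q⁻¹ = 1) (f g : ℂ → ℝ) (hf : Continuous f)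
    (hfc : HasCompactSupport f) (hg : ContDiff ℝ (⊤ : ℕ∞) g) (hgc : HasCompactSupport g)
    (v : ℂ) (hv : ‖v‖ = 1) :
      ENNReal.ofReal |∫ x, f x * fderiv ℝ g x v|
        ≤ 72 *
          ((eLpNorm f p volume +
              ⨆ h : {h : ℂ // h ≠ 0}, (‖h.1‖₊ : ℝ≥0∞) ^ (-α) *
                eLpNorm (fun x => f (x + h.1) - f x) p volume) *
            (eLpNorm g q volume +
              ∫⁻ h : ℂ, (‖h‖₊ : ℝ≥0∞) ^ (-(1-α)) *
                eLpNorm (fun x => g (x + h) - g x) q volume * (‖h‖₊ : ℝ≥0∞) ^ (-(2:ℝ)))) := by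
  have hgcont := hg.continuous
  have hlim := lim_aux f g hf hfc hg hgc v
  set D : ℕ → ℝ := fun n => ∫ x, f x * ((2:ℝ) ^ n * (g (x + ((2:ℝ) ^ n)⁻¹ • v) - g x)) with hD
  set A : ℝ≥0∞ := ⨆ h : {h : ℂ // h ≠ 0}, (‖h.1‖₊ : ℝ≥0∞) ^ (-α) *
                eLpNorm (fun x => f (x + h.1) - f x) p volume with hA
  set K : ℂ → ℝ≥0∞ := fun h => (‖h‖₊ : ℝ≥0∞) ^ (-(1-α)) *
                eLpNorm (fun x => g (x + h) - g x) q volume * (‖h‖₊ : ℝ≥0∞) ^ (-(2:ℝ)) with hK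
  set b : ℕ → Set ℂ := fun n =>
      ball ((((2:ℝ) ^ (n + 1))⁻¹ • v) / 2) (‖((2:ℝ) ^ (n + 1))⁻¹ • v‖ / 6) with hb
  have h0 : ENNReal.ofReal |D 0| ≤ 2 * (eLpNorm f p volume * eLpNorm g q volume) := by
    have h1 : D 0 = ∫ x, f x * (g (x + v) - g x) := by simp [hD]
    rw [h1]
    refine (holder_aux p q hpq f (fun x => g (x + v) - g x) hf (by fun_prop)).trans ?_
    have h2 : eLpNorm (fun x => g (x + v) - g x) q volume ≤
        eLpNorm g q volume + eLpNorm g q volume := by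
      refine (eLpNorm_sub_le (f := fun x => g (x + v)) (g := g)
        (by fun_prop) (by fun_prop) hq).trans ?_
      rw [trans_aux q g hgcont]
    calc _ ≤ eLpNorm f p volume * (eLpNorm g q volume + eLpNorm g q volume) := by gcongr
      _ = _ := by ring
  have hstep : ∀ n, ENNReal.ofReal |D (n + 1) - D n| ≤ 72 * (A * ∫⁻ h in b n, K h) := by
    intro n
    set s : ℂ := ((2:ℝ) ^ (n + 1))⁻¹ • v with hs
    have hn : ‖s‖ = ((2:ℝ) ^ (n + 1))⁻¹ := by
      rw [hs, norm_smul, hv]; simp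
    have hs0 : s ≠ 0 := by
      rw [← norm_pos_iff, hn]; positivity
    have hss : s + s = ((2:ℝ) ^ n)⁻¹ • v := by
      rw [hs, ← add_smul]; congr 1; rw [pow_succ]; field_simp; norm_num
    have e := step_aux f g hf hfc hgcont s ((2:ℝ) ^ n)
    have e' : D (n + 1) - D n = -(2:ℝ) ^ n * ∫ x, (f (x + (-s)) - f x) * (g (x + s) - g x) := by
      rw [← e, hss, ← pow_succ']
    rw [e']
    refine step_bound α hα p q hq hpq f g hf hgcont s hs0 _ (by positivity) ?_
    rw [hn, inv_inv]
    exact pow_le_pow_right₀ (by norm_num) (by omega)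
  have hsum : ∀ n, ENNReal.ofReal |D n| ≤ 2 * (eLpNorm f p volume * eLpNorm g q volume) +
      ∑ k ∈ Finset.range n, 72 * (A * ∫⁻ h in b k, K h) := by
    intro n
    induction n with
    | zero => simpa using h0
    | succ n ih =>
      rw [Finset.sum_range_succ, ← add_assoc]
      calc ENNReal.ofReal |D (n + 1)| ≤ ENNReal.ofReal (|D n| + |D (n + 1) - D n|) := by
            apply ENNReal.ofReal_le_ofReal
            simpa using abs_add_le (D n) (D (n + 1) - D n)
        _ ≤ ENNReal.ofReal |D n| + ENNReal.ofReal |D (n + 1) - D n| := ENNReal.ofReal_add_le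
        _ ≤ _ := add_le_add ih (hstep n)
  have htot : ∀ n, ∑ k ∈ Finset.range n, 72 * (A * ∫⁻ h in b k, K h) ≤ 72 * (A * ∫⁻ h, K h) := by
    intro n
    rw [← Finset.mul_sum, ← Finset.mul_sum]
    gcongr
    calc ∑ k ∈ Finset.range n, ∫⁻ h in b k, K h ≤ ∑' k, ∫⁻ h in b k, K h :=
          ENNReal.sum_le_tsum _
      _ = ∫⁻ h in ⋃ k, b k, K h :=
          (lintegral_iUnion (fun k => measurableSet_ball) (disj_aux v hv) K).symm
      _ ≤ ∫⁻ h, K h := setLIntegral_le_lintegral _ _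
  have hfin : ENNReal.ofReal |∫ x, f x * fderiv ℝ g x v| ≤
      2 * (eLpNorm f p volume * eLpNorm g q volume) + 72 * (A * ∫⁻ h, K h) := by
    refine le_of_tendsto ((ENNReal.continuous_ofReal.tendsto _).comp hlim.abs)
      (Eventually.of_forall fun n => (hsum n).trans ?_)
    gcongr
    exact htot n
  refine hfin.trans ?_
  calc _ ≤ 72 * (eLpNorm f p volume * eLpNorm g q volume) + 72 * (A * ∫⁻ h, K h) := by
        gcongr; norm_num
    _ = 72 * (eLpNorm f p volume * eLpNorm g q volume + A * ∫⁻ h, K h) := by ring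
    _ ≤ _ := by
        gcongr
        rw [add_mul, mul_add, mul_add]
        exact add_le_add le_self_add le_add_self

/-! ## STATEMENT 5 -/


theorem statement5 (α : ℝ) (hα : α ∈ Set.Ioo (0:ℝ) 1)
    (p q : ℝ≥0∞) (hp : 1 ≤ p) (hq : 1 ≤ q) (hpq : p⁻¹ + q⁻¹ = 1) :
    ∃ C : ℝ≥0, 0 < C ∧
    ∀ f g : ℂ → ℝ, ContDiff ℝ (⊤ : ℕ∞) f → HasCompactSupport f →
      ContDiff ℝ (⊤ : ℕ∞) g → HasCompactSupport g →
    ∀ v : ℂ, (v = 1 ∨ v = Complex.I) →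
      ENNReal.ofReal |∫ x, f x * fderiv ℝ g x v|
        ≤ (C : ℝ≥0∞) *
          ((eLpNorm f p volume +
              ⨆ h : {h : ℂ // h ≠ 0}, (‖h.1‖₊ : ℝ≥0∞) ^ (-α) *
                eLpNorm (fun x => f (x + h.1) - f x) p volume) *
            (eLpNorm g q volume +
              ∫⁻ h : ℂ, (‖h‖₊ : ℝ≥0∞) ^ (-(1-α)) *
                eLpNorm (fun x => g (x + h) - g x) q volume * (‖h‖₊ : ℝ≥0∞) ^ (-(2:ℝ)))) := by
  refine ⟨72, by norm_num, fun f g hf hfc hg hgc v hv => ?_⟩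
  have hv1 : ‖v‖ = 1 := by rcases hv with rfl | rfl <;> simp
  have := core α hα p q hq hpq f g hf.continuous hfc hg hgc v hv1
  simpa using this

end Eikonal
end
end

section
/- Let Ω ⊂ ℝ² be a bounded open set, α ∈ (0,1), and m : Ω → S¹ measurable with div m = 0 in the sense of distributions and m ∈ B^{1/(2+α)}_{2+α,∞}(Ω). Then there is C = C(α) > 0 such that for every Φ ∈ ENT with ‖Φ‖_{C^{1,α}} ≤ 1, every open U ⊂ Ω and every ζ ∈ C_c¹(U) with ‖ζ‖_∞ ≤ 1: |∫_U Φ(m)·∇ζ dx| ≤ C · liminf_{ε→0} ε^{−1} ⨍_{B_{2ε}} (∫_{U ∩ (Ω−h)} |m(x+h) − m(x)|^{2+α} dx) dh. -/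
open MeasureTheory Metric Filter Set Bornology
open scoped ENNReal NNReal Topology Real

noncomputable section

namespace Eikonal

/-! ## STATEMENT 6 -/

/-! ### Part 1: angular estimates and the homogeneous extension -/

lemma circ_add (a b : ℝ) : circ (a + b) = circ a * circ b := by
  simp [circ, add_mul, Complex.exp_add]

lemma norm_circ (a : ℝ) : ‖circ a‖ = 1 := by
  simp [circ, Complex.norm_exp_ofReal_mul_I]

lemma norm_mul_circ_arg (z : ℂ) : (‖z‖ : ℂ) * circ z.arg = z :=
  Complex.norm_mul_exp_arg_mul_I z

lemma circ_arg {z : ℂ} (hz : ‖z‖ = 1) : circ z.arg = z := by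
  have := norm_mul_circ_arg z
  simpa [hz] using this

lemma norm_circ_arg_sub (z c : ℂ) (hc : ‖c‖ = 1) : ‖circ z.arg - c‖ ≤ 2 * ‖z - c‖ := by
  have h1 : ‖circ z.arg - z‖ ≤ ‖z - c‖ := by
    have : circ z.arg - z = ((1 - ‖z‖ : ℝ) : ℂ) * circ z.arg := by
      conv_lhs => rw [← norm_mul_circ_arg z]
      rw [norm_mul_circ_arg z]
      push_cast
      rw [sub_mul, norm_mul_circ_arg z, one_mul]
    rw [this, norm_mul, norm_circ, mul_one, Complex.norm_real, Real.norm_eq_abs, ← hc]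
    rw [← norm_sub_rev c z]
    exact abs_norm_sub_norm_le c z
  calc ‖circ z.arg - c‖ = ‖(circ z.arg - z) + (z - c)‖ := by ring_nf
    _ ≤ ‖circ z.arg - z‖ + ‖z - c‖ := norm_add_le _ _
    _ ≤ _ := by linarith

/-- An angle for `z` close to the given angle of `c`. -/
lemma exists_angle (z c : ℂ) (hc : ‖c‖ = 1) :
    ∃ θ : ℝ, circ θ = circ z.arg ∧ |θ - c.arg| ≤ π ∧ |θ - c.arg| ≤ π * ‖z - c‖ := by
  set w := circ z.arg with hw
  have hw1 : ‖w‖ = 1 := norm_circ _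
  have hc0 : c ≠ 0 := by intro h; simp [h] at hc
  have hw0 : w ≠ 0 := by intro h; simp [h] at hw1
  refine ⟨c.arg + (w / c).arg, ?_, ?_, ?_⟩
  · rw [circ_add, circ_arg hc, circ_arg (by simp [hw1, hc])]
    field_simp
  · simpa using Complex.abs_arg_le_pi (w / c)
  · have h1 := Complex.angle_le_mul_norm_sub hw1 hc
    rw [Complex.angle_eq_abs_arg hw0 hc0] at h1
    have h2 := norm_circ_arg_sub z c hc
    have : |(w / c).arg| ≤ π * ‖z - c‖ := by
      have := Real.pi_pos
      nlinarith
    simpa using this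

section Ent

variable {Φ : ℂ → ℂ} {φ' : ℝ → ℂ}

lemma ent_lip (hd : ∀ θ : ℝ, HasDerivAt (fun t => Φ (circ t)) (φ' θ) θ)
    (hb : ∀ θ, ‖φ' θ‖ ≤ 1) (a b : ℝ) : ‖Φ (circ a) - Φ (circ b)‖ ≤ |a - b| := by
  have := Convex.norm_image_sub_le_of_norm_hasDerivWithin_le (f := fun t => Φ (circ t)) (f' := φ')
    (s := univ) (C := 1) (x := b) (y := a) (fun x _ => (hd x).hasDerivWithinAt) (fun x _ => hb x) convex_univ
    (mem_univ _) (mem_univ _)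
  simpa using this

lemma ent_periodic (hd : ∀ θ : ℝ, HasDerivAt (fun t => Φ (circ t)) (φ' θ) θ)
    {a b : ℝ} (hab : circ a = circ b) : φ' a = φ' b := by
  have h1 : HasDerivAt (fun t => Φ (circ t)) (φ' a) b := by
    have h2 : HasDerivAt (fun t : ℝ => t + (a - b)) 1 b := (hasDerivAt_id b).add_const _
    have h3 : HasDerivAt (fun t => Φ (circ t)) (φ' a) (b + (a - b)) := by
      have : b + (a - b) = a := by ring
      rw [this]; exact hd a
    have h4 := HasDerivAt.scomp b h3 h2
    have h5 : ((fun t => Φ (circ t)) ∘ fun t : ℝ => t + (a - b)) = fun t => Φ (circ t) := by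
      funext t
      have : circ (t + (a - b)) = circ t := by
        have e : t + (a - b) = (t - b) + a := by ring
        rw [e, circ_add, hab, ← circ_add]; congr 1; ring
      simp [this]
    rw [h5] at h4
    simpa using h4
  exact h1.unique (hd b)

/-- The field `b = Φ - (1/2) ψ e^{iθ}` (with `φ' = ψ i e^{iθ}`). -/
def bfun (Φ : ℂ → ℂ) (φ' : ℝ → ℂ) (z : ℂ) : ℂ := Φ (circ z.arg) + Complex.I / 2 * φ' z.arg

/-- The 2-homogeneous extension of `Φ`. -/
def ext2 (Φ : ℂ → ℂ) (z : ℂ) : ℂ := ((‖z‖ ^ 2 : ℝ) : ℂ) * Φ (circ z.arg)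

lemma norm_bfun_le (h1 : ∀ θ, ‖Φ (circ θ)‖ ≤ 1) (hb : ∀ θ, ‖φ' θ‖ ≤ 1) (z : ℂ) :
    ‖bfun Φ φ' z‖ ≤ 2 := by
  unfold bfun
  refine (norm_add_le _ _).trans ?_
  have := h1 z.arg
  have := hb z.arg
  simp only [norm_mul, norm_div, Complex.norm_I, Complex.norm_ofNat]
  linarith

lemma bfun_holder {α : ℝ} (hα : α ∈ Set.Ioo (0:ℝ) 1)
    (hd : ∀ θ : ℝ, HasDerivAt (fun t => Φ (circ t)) (φ' θ) θ)
    (hb : ∀ θ, ‖φ' θ‖ ≤ 1) (hh : ∀ θ₁ θ₂ : ℝ, ‖φ' θ₁ - φ' θ₂‖ ≤ |θ₁ - θ₂| ^ α)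
    (z c : ℂ) (hc : ‖c‖ = 1) : ‖bfun Φ φ' z - bfun Φ φ' c‖ ≤ 20 * ‖z - c‖ ^ α := by
  obtain ⟨θ, hθ, hπ, hle⟩ := exists_angle z c hc
  have e : bfun Φ φ' z - bfun Φ φ' c = (Φ (circ θ) - Φ (circ c.arg))
      + Complex.I / 2 * (φ' θ - φ' c.arg) := by
    unfold bfun; rw [hθ, ent_periodic hd hθ]; ring
  have hp := Real.pi_pos
  have hp3 := Real.pi_lt_d2
  have hp1 := Real.pi_gt_three
  set d := |θ - c.arg| with hdd
  have hd0 : 0 ≤ d := abs_nonneg _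
  have h1 : d ≤ π * d ^ α := by
    rcases hd0.eq_or_lt with h | h
    · rw [← h]; positivity
    calc d = d ^ (1 - α) * d ^ α := by rw [← Real.rpow_add h]; simp
      _ ≤ π * d ^ α := by
        gcongr
        calc d ^ (1 - α) ≤ π ^ (1 - α) := by
              apply Real.rpow_le_rpow hd0 hπ; linarith [hα.2]
          _ ≤ π ^ (1:ℝ) := by
              apply Real.rpow_le_rpow_of_exponent_le <;> linarith [hα.1]
          _ = π := Real.rpow_one _
  have h2 : d ^ α ≤ π * ‖z - c‖ ^ α := by
    calc d ^ α ≤ (π * ‖z - c‖) ^ α := Real.rpow_le_rpow hd0 hle hα.1.le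
      _ = π ^ α * ‖z - c‖ ^ α := Real.mul_rpow hp.le (norm_nonneg _)
      _ ≤ π ^ (1:ℝ) * ‖z - c‖ ^ α := by
        gcongr
        · linarith
        · exact hα.2.le
      _ = _ := by rw [Real.rpow_one]
  have h3 := ent_lip hd hb θ c.arg
  have h4 := hh θ c.arg
  have h5 : ‖bfun Φ φ' z - bfun Φ φ' c‖ ≤ d + 1 / 2 * d ^ α := by
    rw [e]
    refine (norm_add_le _ _).trans ?_
    simp only [norm_mul, norm_div, Complex.norm_I, Complex.norm_ofNat]
    linarith
  have h6 : 0 ≤ ‖z - c‖ ^ α := by positivity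
  calc _ ≤ d + 1 / 2 * d ^ α := h5
    _ ≤ (π + 1 / 2) * d ^ α := by linarith
    _ ≤ (π + 1 / 2) * (π * ‖z - c‖ ^ α) := by gcongr
    _ = ((π + 1 / 2) * π) * ‖z - c‖ ^ α := by ring
    _ ≤ 20 * ‖z - c‖ ^ α := by
      gcongr
      nlinarith

lemma ext2_sub_le (hd : ∀ θ : ℝ, HasDerivAt (fun t => Φ (circ t)) (φ' θ) θ)
    (h1 : ∀ θ, ‖Φ (circ θ)‖ ≤ 1) (hb : ∀ θ, ‖φ' θ‖ ≤ 1)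
    (z c : ℂ) (hz : ‖z‖ ≤ 1) (hc : ‖c‖ = 1) : ‖ext2 Φ z - Φ c‖ ≤ 6 * ‖z - c‖ := by
  obtain ⟨θ, hθ, hπ, hle⟩ := exists_angle z c hc
  have h3 := ent_lip hd hb θ c.arg
  rw [circ_arg hc] at h3
  have e : ext2 Φ z - Φ c = (Φ (circ θ) - Φ c) - ((1 - ‖z‖ ^ 2 : ℝ) : ℂ) * Φ (circ θ) := by
    unfold ext2; rw [hθ]; push_cast; ring
  rw [e]
  have h4 : 1 - ‖z‖ ≤ ‖z - c‖ := by
    rw [← hc, norm_sub_rev]; exact norm_sub_norm_le c z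
  have h5 : ‖((1 - ‖z‖ ^ 2 : ℝ) : ℂ) * Φ (circ θ)‖ ≤ 2 * ‖z - c‖ := by
    rw [norm_mul, Complex.norm_real, Real.norm_eq_abs, abs_of_nonneg (by nlinarith [norm_nonneg z])]
    have := h1 θ
    calc (1 - ‖z‖ ^ 2) * ‖Φ (circ θ)‖ ≤ (1 - ‖z‖ ^ 2) * 1 := by
          gcongr; nlinarith [norm_nonneg z]
      _ ≤ 2 * ‖z - c‖ := by nlinarith [norm_nonneg z]
  have := Real.pi_lt_d2
  refine (norm_sub_le _ _).trans ?_
  nlinarith [norm_nonneg (z - c)]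

/-- The differential of the 2-homogeneous extension. -/
lemma ext2_hasFDerivAt (hd : ∀ θ : ℝ, HasDerivAt (fun t => Φ (circ t)) (φ' θ) θ)
    (h1 : ∀ θ, ‖Φ (circ θ)‖ ≤ 1) (z : ℂ) :
    ∃ L : ℂ →L[ℝ] ℂ, HasFDerivAt (ext2 Φ) L z ∧ ∀ v, L v =
      ((2 * (z.re * v.re + z.im * v.im) : ℝ) : ℂ) * Φ (circ z.arg)
      + ((z.re * v.im - z.im * v.re : ℝ) : ℂ) * φ' z.arg := by
  by_cases hz : z = 0
  · subst hz
    refine ⟨0, ?_, by simp⟩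
    rw [hasFDerivAt_iff_isLittleO_nhds_zero]
    have : (fun h : ℂ => ext2 Φ (0 + h) - ext2 Φ 0 - (0 : ℂ →L[ℝ] ℂ) h) =O[𝓝 0] fun h : ℂ => ‖h‖ ^ 2 := by
      apply Asymptotics.IsBigO.of_bound 1
      filter_upwards with h
      simp only [ext2, zero_add, norm_zero, ContinuousLinearMap.zero_apply]
      simp only [ne_eq, OfNat.ofNat_ne_zero, not_false_eq_true, zero_pow, Complex.ofReal_zero, zero_mul, sub_zero,
        norm_mul, Complex.norm_real, norm_pow, norm_norm, one_mul]
      exact mul_le_of_le_one_right (by positivity) (h1 _)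
    refine this.trans_isLittleO ?_
    exact Asymptotics.isLittleO_norm_pow_id one_lt_two
  · have hn : HasFDerivAt (fun y : ℂ => ((‖y‖ ^ 2 : ℝ) : ℂ))
        (Complex.ofRealCLM.comp (2 • (innerSL ℝ z))) z :=
      Complex.ofRealCLM.hasFDerivAt.comp z (hasStrictFDerivAt_norm_sq z).hasFDerivAt
    have hlog : HasDerivAt (fun y : ℂ => Complex.log (y / z)) (z⁻¹) z := by
      have h0 : HasDerivAt (fun y : ℂ => y / z) (1 / z) z := (hasDerivAt_id z).div_const z
      have := h0.clog (by rw [div_self hz]; exact Complex.one_mem_slitPlane)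
      rw [div_self hz] at this
      simpa using this
    have hth : HasFDerivAt (fun y : ℂ => z.arg + (Complex.log (y / z)).im)
        (Complex.imCLM.comp ((ContinuousLinearMap.toSpanSingleton ℂ (z⁻¹) : ℂ →L[ℂ] ℂ).restrictScalars ℝ)) z :=
      (Complex.imCLM.hasFDerivAt.comp z (hlog.hasFDerivAt.restrictScalars ℝ)).const_add _
    have hz' : z.arg + (Complex.log (z / z)).im = z.arg := by simp [div_self hz]
    have hf : HasFDerivAt (fun y : ℂ => Φ (circ (z.arg + (Complex.log (y / z)).im))) _ z :=
      HasFDerivAt.comp z (g := fun t => Φ (circ t)) (by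
        simp only [hz']
        exact (hd z.arg).hasFDerivAt) hth
    have hm := hn.mul hf
    refine ⟨_, hm.congr_of_eventuallyEq ?_, ?_⟩
    · filter_upwards [isOpen_ne.mem_nhds hz] with y hy
      unfold ext2
      congr 2
      rw [circ_add, Complex.log_im]
      have hyz : y / z ≠ 0 := div_ne_zero hy hz
      have h2 : (‖y / z‖ : ℂ) * circ (y / z).arg = y / z := norm_mul_circ_arg _
      have h3 := norm_mul_circ_arg z
      have h4 := norm_mul_circ_arg y
      rw [norm_div] at h2
      have n1 : (‖y‖ : ℂ) ≠ 0 := by simpa using hy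
      have n2 : (‖z‖ : ℂ) ≠ 0 := by simpa using hz
      apply mul_left_cancel₀ n1
      rw [h4]
      push_cast at h2
      calc y = y / z * z := by field_simp
        _ = ((‖y‖ : ℂ) / ‖z‖ * circ (y / z).arg) * (‖z‖ * circ z.arg) := by rw [h2, h3]
        _ = _ := by field_simp
    · intro v
      have n2 : ‖z‖ ^ 2 ≠ 0 := by simpa using hz
      have hv : (v * z⁻¹).im * ‖z‖ ^ 2 = z.re * v.im - z.im * v.re := by
        rw [Complex.mul_im, Complex.inv_re, Complex.inv_im, Complex.normSq_eq_norm_sq]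
        field_simp; ring
      have hc : ((z.re * v.im - z.im * v.re : ℝ) : ℂ) = ((v * z⁻¹).im : ℂ) * ((‖z‖ ^ 2 : ℝ) : ℂ) := by
        rw [← hv]; push_cast; ring
      rw [hc]
      simp [hz, Complex.inner]
      ring

end Ent

/-! ### Part 2: mollification kernels -/

/-- The area of the ball of radius `2ε`. -/
def areaV (ε : ℝ) : ℝ := 4 * π * ε ^ 2

lemma areaV_pos {ε : ℝ} (hε : 0 < ε) : 0 < areaV ε := by
  unfold areaV; have := Real.pi_pos; positivity

lemma volume_ball_eq {ε : ℝ} (hε : 0 < ε) :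
    volume (ball (0:ℂ) (2 * ε)) = ENNReal.ofReal (areaV ε) := by
  rw [Complex.volume_ball, ← ENNReal.ofReal_pow (by positivity)]
  have : (NNReal.pi : ℝ≥0∞) = ENNReal.ofReal π := by
    rw [ENNReal.ofReal, ← NNReal.coe_real_pi, Real.toNNReal_coe]
  rw [this, ← ENNReal.ofReal_mul (by positivity)]
  congr 1
  unfold areaV; ring

/-- Smooth kernel at scale `ε`. -/
structure Ker (K ε : ℝ) (k : ℂ → ℝ) : Prop where
  smooth : ContDiff ℝ (⊤ : ℕ∞) k
  cpt : HasCompactSupport k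
  tsupp : tsupport k ⊆ ball 0 (2 * ε)
  nonneg : ∀ t, 0 ≤ k t
  bd : ∀ t, |k t| ≤ K / areaV ε
  dbd : ∀ t, ‖fderiv ℝ k t‖ ≤ K / ε / areaV ε
  int1 : ∫ t, k t = 1
  int0 : ∀ v, ∫ t, fderiv ℝ k t v = 0

lemma exists_ker : ∃ K : ℝ, 0 < K ∧ ∀ ε : ℝ, 0 < ε → ∃ k : ℂ → ℝ, Ker K ε k := by
  let φ : ContDiffBump (0:ℂ) := ⟨1 / 2, 1, by norm_num, by norm_num⟩
  let ρ : ℂ → ℝ := φ.normed volume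
  have hρs : ContDiff ℝ (⊤ : ℕ∞) ρ := φ.contDiff_normed
  have hρc : HasCompactSupport ρ := φ.hasCompactSupport_normed
  have hρi : ∫ t, ρ t = 1 := φ.integral_normed
  have hρt : tsupport ρ = closedBall 0 1 := φ.tsupport_normed_eq
  obtain ⟨A, hA⟩ := hρc.exists_bound_of_continuous hρs.continuous
  obtain ⟨A', hA'⟩ := (hρc.fderiv (𝕜 := ℝ)).exists_bound_of_continuous
    (hρs.continuous_fderiv (by simp))
  have hA0 : 0 ≤ A := (norm_nonneg _).trans (hA 0)
  have hA0' : 0 ≤ A' := (norm_nonneg _).trans (hA' 0)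
  have hp := Real.pi_pos
  refine ⟨4 * π * (A + A' + 1), by positivity, fun ε hε => ?_⟩
  let k : ℂ → ℝ := fun t => (ε ^ 2)⁻¹ * ρ (ε⁻¹ • t)
  have hks : ContDiff ℝ (⊤ : ℕ∞) k := contDiff_const.mul (hρs.comp (contDiff_const_smul _))
  have hkt : tsupport k ⊆ closedBall 0 ε := by
    apply closure_minimal _ isClosed_closedBall
    intro t ht
    have h1 : ε⁻¹ • t ∈ tsupport ρ := by
      apply subset_tsupport
      intro h0
      apply ht
      change (ε ^ 2)⁻¹ * ρ (ε⁻¹ • t) = 0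
      rw [h0, mul_zero]
    rw [hρt] at h1
    simp only [mem_closedBall, dist_zero_right, norm_smul, norm_inv, Real.norm_eq_abs, abs_of_pos hε] at h1 ⊢
    rwa [inv_mul_le_iff₀ hε, mul_one] at h1
  have hkc : HasCompactSupport k :=
    (isCompact_closedBall (0:ℂ) ε).of_isClosed_subset (isClosed_tsupport _) hkt
  have hintg : Integrable k := hks.continuous.integrable_of_hasCompactSupport hkc
  refine ⟨k, ⟨hks, hkc, ?_, ?_, ?_, ?_, ?_, ?_⟩⟩
  · refine hkt.trans ?_
    apply closedBall_subset_ball; linarith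
  · intro t
    have : 0 ≤ ρ (ε⁻¹ • t) := φ.nonneg_normed _
    have h2 : 0 ≤ (ε ^ 2)⁻¹ := by positivity
    exact mul_nonneg h2 this
  · intro t
    have h1 : |ρ (ε⁻¹ • t)| ≤ A := hA _
    have : |k t| ≤ (ε ^ 2)⁻¹ * A := by
      simp only [k, abs_mul, abs_inv, abs_pow, abs_of_pos hε]
      gcongr
    refine this.trans ?_
    unfold areaV
    rw [mul_div_mul_left _ _ (by positivity), div_eq_inv_mul]
    gcongr
    linarith
  · intro t
    have hder : HasFDerivAt k ((ε ^ 2)⁻¹ • ((fderiv ℝ ρ (ε⁻¹ • t)).comp (ε⁻¹ • ContinuousLinearMap.id ℝ ℂ))) t := by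
      have h1 : HasFDerivAt ρ (fderiv ℝ ρ (ε⁻¹ • t)) (ε⁻¹ • t) :=
        (hρs.differentiable (by simp) _).hasFDerivAt
      have h2 : HasFDerivAt (fun t : ℂ => ε⁻¹ • t) (ε⁻¹ • ContinuousLinearMap.id ℝ ℂ) t :=
        (ε⁻¹ • ContinuousLinearMap.id ℝ ℂ).hasFDerivAt
      exact (h1.comp t h2).const_mul _
    rw [hder.fderiv]
    have h2 : ‖(fderiv ℝ ρ (ε⁻¹ • t)).comp (ε⁻¹ • ContinuousLinearMap.id ℝ ℂ)‖ ≤ A' * ε⁻¹ := by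
      refine (ContinuousLinearMap.opNorm_comp_le _ _).trans ?_
      gcongr
      · exact hA' _
      · rw [norm_smul, norm_inv, Real.norm_eq_abs, abs_of_pos hε]
        have := ContinuousLinearMap.norm_id_le (𝕜 := ℝ) (E := ℂ)
        have : 0 < ε⁻¹ := by positivity
        nlinarith
    rw [norm_smul, norm_inv, norm_pow, Real.norm_eq_abs, abs_of_pos hε]
    calc (ε ^ 2)⁻¹ * _ ≤ (ε ^ 2)⁻¹ * (A' * ε⁻¹) := by gcongr
      _ = 4 * π * A' / ε / areaV ε := by unfold areaV; field_simp
      _ ≤ _ := by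
        have := areaV_pos hε
        gcongr
        linarith
  · simp only [k]
    rw [integral_const_mul, Measure.integral_comp_smul volume ρ ε⁻¹, hρi]
    simp [abs_of_pos hε]
    field_simp
  · intro v
    have := integral_mul_fderiv_eq_neg_fderiv_mul_of_integrable (μ := (volume : Measure ℂ))
      (f := fun _ : ℂ => (1:ℝ)) (g := k) (v := v) (by simp) (by
        simp only [one_mul]
        apply Continuous.integrable_of_hasCompactSupport
        · exact (hks.continuous_fderiv (by simp)).clm_apply continuous_const
        · exact (hkc.fderiv (𝕜 := ℝ)).comp_left (g := fun L : ℂ →L[ℝ] ℝ => L v) (by simp))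
      (by simpa using hintg) (by intros; fun_prop) (fun x _ => hks.differentiable (by simp) x)
    simpa using this

namespace Ker

variable {K ε : ℝ} {k : ℂ → ℝ}

lemma zero_out (hk : Ker K ε k) {t : ℂ} (ht : t ∉ ball (0:ℂ) (2 * ε)) : k t = 0 :=
  image_eq_zero_of_notMem_tsupport fun h => ht (hk.tsupp h)

lemma dzero_out (hk : Ker K ε k) {t : ℂ} (ht : t ∉ ball (0:ℂ) (2 * ε)) : fderiv ℝ k t = 0 :=
  image_eq_zero_of_notMem_tsupport fun h => ht (hk.tsupp (tsupport_fderiv_subset ℝ h))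

end Ker

/-- The mollification of `F` by `k`. -/
def smo (k : ℂ → ℝ) (F : ℂ → ℂ) (x : ℂ) : ℂ := ∫ t, k t • F (x - t)

lemma locInt_of_bdd {F : ℂ → ℂ} {C : ℝ} (hF : Measurable F) (hC : ∀ x, ‖F x‖ ≤ C) :
    LocallyIntegrable F := by
  intro x
  refine ⟨ball x 1, ball_mem_nhds x one_pos, ?_⟩
  exact Measure.integrableOn_of_bounded (M := C) measure_ball_lt_top.ne hF.aestronglyMeasurable
    (Eventually.of_forall hC)

lemma integrable_ker_mul {κ : ℂ → ℝ} {F : ℂ → ℂ} {C : ℝ} (hκ : Continuous κ)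
    (hκc : HasCompactSupport κ) (hF : Measurable F) (hC : ∀ x, ‖F x‖ ≤ C) :
    Integrable (fun t => κ t • F t) := by
  have h1 : Integrable κ := hκ.integrable_of_hasCompactSupport hκc
  exact h1.smul_bdd C hF.aestronglyMeasurable (Eventually.of_forall hC)

lemma smo_hasFDerivAt {K ε : ℝ} {k : ℂ → ℝ} (hk : Ker K ε k) {F : ℂ → ℂ} {C : ℝ}
    (hF : Measurable F) (hC : ∀ x, ‖F x‖ ≤ C) (x : ℂ) :
    ∃ L : ℂ →L[ℝ] ℂ, HasFDerivAt (smo k F) L x ∧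
      ∀ v, L v = ∫ t, (fderiv ℝ k t v) • F (x - t) := by
  have h := hk.cpt.hasFDerivAt_convolution_left (ContinuousLinearMap.lsmul ℝ ℝ)
    (hk.smooth.of_le (by simp)) (locInt_of_bdd hF hC) x
  refine ⟨_, h, fun v => ?_⟩
  unfold convolution
  rw [ContinuousLinearMap.integral_apply]
  · rfl
  · have hc : HasCompactSupport (fderiv ℝ k) := hk.cpt.fderiv (𝕜 := ℝ)
    exact hc.convolutionExists_left _ (hk.smooth.continuous_fderiv (by simp)) (locInt_of_bdd hF hC) x

lemma dker_cont {K ε : ℝ} {k : ℂ → ℝ} (hk : Ker K ε k) (v : ℂ) :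
    Continuous (fun t => fderiv ℝ k t v) ∧ HasCompactSupport (fun t => fderiv ℝ k t v) :=
  ⟨(hk.smooth.continuous_fderiv (by simp)).clm_apply continuous_const,
    (hk.cpt.fderiv (𝕜 := ℝ)).comp_left (g := fun L : ℂ →L[ℝ] ℝ => L v) (by simp)⟩

/-- Subtracting constants. -/
lemma smo_sub {K ε : ℝ} {k : ℂ → ℝ} (hk : Ker K ε k) {F : ℂ → ℂ} {C : ℝ}
    (hF : Measurable F) (hC : ∀ x, ‖F x‖ ≤ C) (x c : ℂ) :
    smo k F x - c = ∫ t, k t • (F (x - t) - c) := by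
  have h1 : Integrable (fun t => k t • F (x - t)) :=
    integrable_ker_mul (F := fun t => F (x - t)) hk.smooth.continuous hk.cpt (by fun_prop) (fun t => hC (x - t))
  have h2 : Integrable (fun t => k t • c) :=
    integrable_ker_mul (F := fun t => c) (C := ‖c‖) hk.smooth.continuous hk.cpt (by fun_prop) (fun t => le_rfl)
  simp only [smul_sub]
  rw [integral_sub h1 h2, integral_smul_const, hk.int1, one_smul]
  rfl

lemma dsmo_sub {K ε : ℝ} {k : ℂ → ℝ} (hk : Ker K ε k) {F : ℂ → ℂ} {C : ℝ}
    (hF : Measurable F) (hC : ∀ x, ‖F x‖ ≤ C) (x c v : ℂ) :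
    ∫ t, (fderiv ℝ k t v) • F (x - t) = ∫ t, (fderiv ℝ k t v) • (F (x - t) - c) := by
  obtain ⟨hc1, hc2⟩ := dker_cont hk v
  have h1 : Integrable (fun t => fderiv ℝ k t v • F (x - t)) :=
    integrable_ker_mul (F := fun t => F (x - t)) hc1 hc2 (by fun_prop) (fun t => hC (x - t))
  have h2 : Integrable (fun t => fderiv ℝ k t v • c) :=
    integrable_ker_mul (F := fun t => c) (C := ‖c‖) hc1 hc2 (by fun_prop) (fun t => le_rfl)
  simp only [smul_sub]
  rw [integral_sub h1 h2, integral_smul_const, hk.int0, zero_smul, sub_zero]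

/-- Averages over `B_{2ε}`. -/
def av (ε : ℝ) (g : ℂ → ℝ) : ℝ := (areaV ε)⁻¹ * ∫ t in ball (0:ℂ) (2 * ε), g t

lemma ker_bound {E : Type*} [NormedAddCommGroup E] [NormedSpace ℝ E] {ε A C D : ℝ}
    (hε : 0 < ε) {κ : ℂ → ℝ} {F : ℂ → E} {g : ℂ → ℝ}
    (hA : 0 ≤ A)
    (hκ : ∀ t, |κ t| ≤ A / areaV ε) (hκ0 : ∀ t ∉ ball (0:ℂ) (2 * ε), κ t = 0)
    (hF : ∀ t, ‖F t‖ ≤ C * g t) (hg : Measurable g) (hgD : ∀ t, |g t| ≤ D) :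
    ‖∫ t, κ t • F t‖ ≤ A * C * av ε g := by
  have hV := areaV_pos hε
  have e : A * C * av ε g = ∫ t, (ball (0:ℂ) (2 * ε)).indicator (fun t => A / areaV ε * (C * g t)) t := by
    rw [integral_indicator measurableSet_ball, integral_const_mul, integral_const_mul]
    unfold av; ring
  rw [e]
  apply norm_integral_le_of_norm_le
  · rw [integrable_indicator_iff measurableSet_ball]
    apply Integrable.const_mul
    apply Integrable.const_mul
    exact Measure.integrableOn_of_bounded (M := D) measure_ball_lt_top.ne hg.aestronglyMeasurable
      (Eventually.of_forall hgD)
  · refine Eventually.of_forall fun t => ?_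
    by_cases ht : t ∈ ball (0:ℂ) (2 * ε)
    · rw [indicator_of_mem ht, norm_smul, Real.norm_eq_abs]
      exact mul_le_mul (hκ t) (hF t) (norm_nonneg _) (by positivity)
    · rw [indicator_of_notMem ht, hκ0 t ht]; simp

lemma av_nonneg {ε : ℝ} (hε : 0 < ε) {g : ℂ → ℝ} (hg : ∀ t, 0 ≤ g t) : 0 ≤ av ε g :=
  mul_nonneg (inv_nonneg.2 (areaV_pos hε).le) (integral_nonneg hg)

lemma av_jensen {ε p q D : ℝ} (hε : 0 < ε) (hq : 0 < q) (hqp : q ≤ p) {g : ℂ → ℝ}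
    (hg : Measurable g) (hg0 : ∀ t, 0 ≤ g t) (hgD : ∀ t, g t ≤ D) :
    av ε (fun t => g t ^ q) ≤ (av ε (fun t => g t ^ p) ^ (1 / p)) ^ q := by
  have hp : 0 < p := hq.trans_le hqp
  have hV := areaV_pos hε
  have hvol : volume.real (ball (0:ℂ) (2 * ε)) = areaV ε := by
    rw [Measure.real, volume_ball_eq hε, ENNReal.toReal_ofReal hV.le]
  have hav : ∀ f : ℂ → ℝ, av ε f = ⨍ t in ball (0:ℂ) (2 * ε), f t := by
    intro f
    rw [setAverage_eq, hvol]; rfl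
  have hD : 0 ≤ D := (hg0 0).trans (hgD 0)
  have hintg : ∀ r : ℝ, 0 ≤ r → IntegrableOn (fun t => g t ^ r) (ball (0:ℂ) (2 * ε)) := by
    intro r hr
    refine Measure.integrableOn_of_bounded (M := D ^ r) measure_ball_lt_top.ne
      (hg.pow_const r).aestronglyMeasurable (Eventually.of_forall fun t => ?_)
    rw [Real.norm_eq_abs, abs_of_nonneg (Real.rpow_nonneg (hg0 t) r)]
    exact Real.rpow_le_rpow (hg0 t) (hgD t) hr
  have hpq : 1 ≤ p / q := by rwa [le_div_iff₀ hq, one_mul]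
  have key : (av ε (fun t => g t ^ q)) ^ (p / q) ≤ av ε (fun t => g t ^ p) := by
    have h1 := ConvexOn.map_set_average_le (μ := (volume : Measure ℂ)) (t := ball (0:ℂ) (2 * ε))
      (f := fun t => g t ^ q) (convexOn_rpow hpq)
      (Real.continuous_rpow_const (by positivity)).continuousOn isClosed_Ici
      (measure_ball_pos _ _ (by positivity)).ne' measure_ball_lt_top.ne
      (Eventually.of_forall fun t => Real.rpow_nonneg (hg0 t) q) (hintg q hq.le) (by
        have : ((fun x : ℝ => x ^ (p / q)) ∘ fun t => g t ^ q) = fun t => g t ^ p := by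
          funext t
          simp only [Function.comp]
          rw [← Real.rpow_mul (hg0 t)]; congr 1; field_simp
        rw [this]; exact hintg p hp.le)
    rw [hav, hav]
    refine h1.trans (le_of_eq ?_)
    congr 1
    funext t
    rw [← Real.rpow_mul (hg0 t)]; congr 1; field_simp
  have h0 : 0 ≤ av ε (fun t => g t ^ q) := av_nonneg hε fun t => Real.rpow_nonneg (hg0 t) q
  have h0p : 0 ≤ av ε (fun t => g t ^ p) := av_nonneg hε fun t => Real.rpow_nonneg (hg0 t) p
  calc av ε (fun t => g t ^ q) = ((av ε (fun t => g t ^ q)) ^ (p / q)) ^ (q / p) := by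
        rw [← Real.rpow_mul h0]
        have : p / q * (q / p) = 1 := by field_simp
        rw [this, Real.rpow_one]
    _ ≤ (av ε (fun t => g t ^ p)) ^ (q / p) :=
        Real.rpow_le_rpow (Real.rpow_nonneg h0 _) key (by positivity)
    _ = _ := by
        rw [← Real.rpow_mul h0p]; congr 1; field_simp

/-! ### Part 3: the pointwise estimates -/

section Pointwise

variable {K ε α : ℝ} {k : ℂ → ℝ} {m : ℂ → ℂ} {Φ : ℂ → ℂ} {φ' : ℝ → ℂ}

/-- The `L^p` mean oscillation of `m` at scale `ε`. -/
def osc (ε p : ℝ) (m : ℂ → ℂ) (x : ℂ) : ℝ := (av ε (fun t => ‖m (x - t) - m x‖ ^ p)) ^ (1 / p)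

lemma osc_nonneg (hε : 0 < ε) (p : ℝ) (m : ℂ → ℂ) (x : ℂ) : 0 ≤ osc ε p m x :=
  Real.rpow_nonneg (av_nonneg hε fun t => by positivity) _

lemma av_le_osc (hε : 0 < ε) {p q : ℝ} (hq : 0 < q) (hqp : q ≤ p) (hm : Measurable m)
    (hm1 : ∀ x, ‖m x‖ = 1) (x : ℂ) :
    av ε (fun t => ‖m (x - t) - m x‖ ^ q) ≤ osc ε p m x ^ q := by
  refine av_jensen (D := 2) hε hq hqp (by fun_prop) (fun t => norm_nonneg _) (fun t => ?_)
  refine (norm_sub_le _ _).trans ?_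
  rw [hm1, hm1]; norm_num

/-- Kernel bound in terms of the oscillation. -/
lemma ker_osc {E : Type*} [NormedAddCommGroup E] [NormedSpace ℝ E] {A C p q : ℝ}
    (hε : 0 < ε) (hq : 0 < q) (hqp : q ≤ p) (hm : Measurable m)
    (hm1 : ∀ x, ‖m x‖ = 1) (x : ℂ) {κ : ℂ → ℝ} {F : ℂ → E} (hA : 0 ≤ A) (hC : 0 ≤ C)
    (hκ : ∀ t, |κ t| ≤ A / areaV ε) (hκ0 : ∀ t ∉ ball (0:ℂ) (2 * ε), κ t = 0)
    (hF : ∀ t, ‖F t‖ ≤ C * ‖m (x - t) - m x‖ ^ q) :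
    ‖∫ t, κ t • F t‖ ≤ A * C * osc ε p m x ^ q := by
  refine (ker_bound (D := 2 ^ q) hε hA hκ hκ0 hF ((by fun_prop : Measurable fun t =>
    ‖m (x - t) - m x‖).pow_const q) (fun t => ?_)).trans ?_
  · rw [abs_of_nonneg (by positivity)]
    refine Real.rpow_le_rpow (norm_nonneg _) ?_ hq.le
    refine (norm_sub_le _ _).trans ?_
    rw [hm1, hm1]; norm_num
  · exact mul_le_mul_of_nonneg_left (av_le_osc hε hq hqp hm hm1 x) (by positivity)

lemma inner_sub_unit {a c : ℂ} (ha : ‖a‖ = 1) (hc : ‖c‖ = 1) :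
    |inner ℝ c (a - c)| = 1 / 2 * ‖a - c‖ ^ 2 := by
  have h := norm_add_sq_real c (a - c)
  rw [add_sub_cancel, ha, hc] at h
  have : inner ℝ c (a - c) = - (1 / 2 * ‖a - c‖ ^ 2) := by linarith
  rw [this, abs_neg, abs_of_nonneg (by positivity)]

/-- The kernel bound for the radial component, gaining one power. -/
lemma ker_osc_inner {A p : ℝ}
    (hε : 0 < ε) (hp : 2 ≤ p) (hm : Measurable m)
    (hm1 : ∀ x, ‖m x‖ = 1) (x : ℂ) {κ : ℂ → ℝ} (hA : 0 ≤ A)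
    (hκc : Continuous κ) (hκs : HasCompactSupport κ)
    (hκ : ∀ t, |κ t| ≤ A / areaV ε) (hκ0 : ∀ t ∉ ball (0:ℂ) (2 * ε), κ t = 0) :
    |inner ℝ (m x) (∫ t, κ t • (m (x - t) - m x))| ≤ A / 2 * osc ε p m x ^ 2 := by
  have hi : Integrable (fun t => κ t • (m (x - t) - m x)) :=
    integrable_ker_mul (F := fun t => m (x - t) - m x) (C := 2) hκc hκs (by fun_prop) (fun t => by
      refine (norm_sub_le _ _).trans ?_
      rw [hm1, hm1]; norm_num)
  have e : inner ℝ (m x) (∫ t, κ t • (m (x - t) - m x))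
      = ∫ t, κ t • inner ℝ (m x) (m (x - t) - m x) := by
    rw [← integral_inner hi]
    congr 1; funext t
    rw [real_inner_smul_right]; rfl
  rw [e, ← Real.norm_eq_abs]
  have := ker_osc (E := ℝ) (p := p) (q := 2) (C := 1 / 2) hε (by norm_num) hp hm hm1 x hA (by norm_num) hκ hκ0
    (F := fun t => inner ℝ (m x) (m (x - t) - m x)) (fun t => by
      rw [Real.norm_eq_abs, inner_sub_unit (hm1 _) (hm1 _)]
      norm_num)
  refine this.trans (le_of_eq ?_)
  rw [Real.rpow_two]
  ring

/-- The approximating field. -/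
def Yfun (k : ℂ → ℝ) (m : ℂ → ℂ) (Φ : ℂ → ℂ) (φ' : ℝ → ℂ) (x : ℂ) : ℂ :=
  ext2 Φ (smo k m x) + ((1 - ‖smo k m x‖ ^ 2 : ℝ) : ℂ) * smo k (fun y => bfun Φ φ' (m y)) x

/-- The algebraic identity behind the entropy production. -/
lemma alg_div (z f g e N D1 DI E1 EI : ℂ) (r ψ w : ℝ) (he : e.re ^ 2 + e.im ^ 2 = 1)
    (hz1 : z.re = r * e.re) (hz2 : z.im = r * e.im) (hg1 : g.re = - ψ * e.im) (hg2 : g.im = ψ * e.re)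
    (hD : D1.re + DI.im = 0) :
    ((((2 * (z.re * D1.re + z.im * D1.im) : ℝ) : ℂ) * f + ((z.re * D1.im - z.im * D1.re : ℝ) : ℂ) * g)
      + ((w : ℂ) * E1 + ((-2 * (z.re * D1.re + z.im * D1.im) : ℝ) : ℂ) * N)).re
    + ((((2 * (z.re * DI.re + z.im * DI.im) : ℝ) : ℂ) * f + ((z.re * DI.im - z.im * DI.re : ℝ) : ℂ) * g)
      + ((w : ℂ) * EI + ((-2 * (z.re * DI.re + z.im * DI.im) : ℝ) : ℂ) * N)).im
    = 2 * ((f + Complex.I / 2 * g - N).re * (z.re * D1.re + z.im * D1.im)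
      + (f + Complex.I / 2 * g - N).im * (z.re * DI.re + z.im * DI.im)) + w * (E1.re + EI.im) := by
  have i2 : (Complex.I / 2).re = 0 := by simp
  have i3 : (Complex.I / 2).im = 1 / 2 := by simp
  simp only [Complex.add_re, Complex.add_im, Complex.sub_re, Complex.sub_im, Complex.mul_re,
    Complex.mul_im, Complex.ofReal_re, Complex.ofReal_im, i2, i3, hz1, hz2, hg1, hg2]
  linear_combination (ψ * r * (D1.re + DI.im)) * he + ψ * r * hD

end Pointwise

section Pointwise2

variable {K ε α : ℝ} {k : ℂ → ℝ} {m : ℂ → ℂ} {Φ : ℂ → ℂ} {φ' : ℝ → ℂ}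

lemma dker_bd (hk : Ker K ε k) (v t : ℂ) : |fderiv ℝ k t v| ≤ (K / ε * ‖v‖) / areaV ε := by
  calc |fderiv ℝ k t v| ≤ ‖fderiv ℝ k t‖ * ‖v‖ := (fderiv ℝ k t).le_opNorm v
    _ ≤ K / ε / areaV ε * ‖v‖ := by gcongr; exact hk.dbd t
    _ = _ := by ring

lemma dker_zero (hk : Ker K ε k) (v : ℂ) : ∀ t ∉ ball (0:ℂ) (2 * ε), fderiv ℝ k t v = 0 := by
  intro t ht
  rw [hk.dzero_out ht]; simp

lemma av_one (hε : 0 < ε) : av ε (fun _ => 1) = 1 := by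
  have hV := areaV_pos hε
  unfold av
  rw [setIntegral_const, Measure.real, volume_ball_eq hε, ENNReal.toReal_ofReal hV.le]
  simp [hV.ne']

lemma smo_norm_le (hk : Ker K ε k) {F : ℂ → ℂ} {C : ℝ} (hC : ∀ x, ‖F x‖ ≤ C) (x : ℂ) :
    ‖smo k F x‖ ≤ C := by
  have hi : Integrable k := hk.smooth.continuous.integrable_of_hasCompactSupport hk.cpt
  have : ‖smo k F x‖ ≤ ∫ t, k t * C := by
    apply norm_integral_le_of_norm_le (hi.mul_const C)
    refine Eventually.of_forall fun t => ?_
    rw [norm_smul, Real.norm_eq_abs, abs_of_nonneg (hk.nonneg t)]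
    exact mul_le_mul_of_nonneg_left (hC _) (hk.nonneg t)
  rwa [integral_mul_const, hk.int1, one_mul] at this

lemma dsmo_norm_le (hε : 0 < ε) (hK : 0 < K) (hk : Ker K ε k) {F : ℂ → ℂ} {C : ℝ}
    (hC : ∀ x, ‖F x‖ ≤ C) (x v : ℂ) :
    ‖∫ t, fderiv ℝ k t v • F (x - t)‖ ≤ K / ε * ‖v‖ * C := by
  have := ker_bound (D := 1) (C := C) (g := fun _ => 1) (F := fun t => F (x - t)) hε
    (by positivity : 0 ≤ K / ε * ‖v‖) (dker_bd hk v) (dker_zero hk v)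
    (fun t => by simpa using hC (x - t)) measurable_const (by simp)
  rwa [av_one hε, mul_one] at this

lemma dsmo_trace (hk : Ker K ε k) (hm : Measurable m) (hm1 : ∀ x, ‖m x‖ = 1) (x : ℂ) :
    (∫ t, fderiv ℝ k t 1 • m (x - t)).re + (∫ t, fderiv ℝ k t Complex.I • m (x - t)).im
      = ∫ t, fderiv ℝ k t (m (x - t)) := by
  have hi : ∀ v, Integrable (fun t => fderiv ℝ k t v • m (x - t)) := fun v =>
    integrable_ker_mul (F := fun t => m (x - t)) (C := 1) (dker_cont hk v).1 (dker_cont hk v).2 (by fun_prop)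
      (fun t => (hm1 _).le)
  have h1 := Complex.reCLM.integral_comp_comm (hi 1)
  have h2 := Complex.imCLM.integral_comp_comm (hi Complex.I)
  simp only [Complex.reCLM_apply, Complex.imCLM_apply] at h1 h2
  rw [← h1, ← h2, ← integral_add]
  · congr 1; funext t
    have : m (x - t) = (m (x - t)).re • (1:ℂ) + (m (x - t)).im • Complex.I := by
      simp [Complex.re_add_im]
    conv_rhs => rw [this]
    rw [map_add, map_smul, map_smul]
    simp only [smul_eq_mul, Complex.real_smul, Complex.re_ofReal_mul, Complex.im_ofReal_mul]
    ring
  · exact (hi 1).re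
  · exact (hi Complex.I).im

set_option maxHeartbeats 800000 in
lemma pt_est (hα : α ∈ Set.Ioo (0:ℝ) 1) (hK : 0 < K) (hε : 0 < ε) (hk : Ker K ε k)
    (hm : Measurable m) (hm1 : ∀ x, ‖m x‖ = 1)
    (hd : ∀ θ : ℝ, HasDerivAt (fun t => Φ (circ t)) (φ' θ) θ)
    (hφc : Continuous φ')
    (hdot : ∀ θ : ℝ, dotR (φ' θ) (circ θ) = 0)
    (h1 : ∀ θ, ‖Φ (circ θ)‖ ≤ 1) (hb : ∀ θ, ‖φ' θ‖ ≤ 1)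
    (hh : ∀ θ₁ θ₂ : ℝ, ‖φ' θ₁ - φ' θ₂‖ ≤ |θ₁ - θ₂| ^ α) (x : ℂ) :
    ∃ L : ℂ →L[ℝ] ℂ, HasFDerivAt (Yfun k m Φ φ') L x ∧ (∀ v, ‖L v‖ ≤ 9 * (K / ε) * ‖v‖) ∧
      ((∫ t, fderiv ℝ k t (m (x - t))) = 0 →
        |(L 1).re + (L Complex.I).im| ≤ 200 * (2 * K + 1) ^ 3 / ε * osc ε (2 + α) m x ^ (2 + α)) ∧
      ‖Yfun k m Φ φ' x - Φ (m x)‖ ≤ 10 * K * osc ε (2 + α) m x := by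
  have hα0 := hα.1
  have hα1 := hα.2
  set s := osc ε (2 + α) m x with hs
  have hs0 : 0 ≤ s := osc_nonneg hε _ _ _
  set F : ℂ → ℂ := fun y => bfun Φ φ' (m y) with hFdef
  have hΦc : Continuous fun t => Φ (circ t) :=
    continuous_iff_continuousAt.2 fun t => (hd t).continuousAt
  have hFm : Measurable F := by
    have hb0 : Continuous fun t : ℝ => Φ (circ t) + Complex.I / 2 * φ' t :=
      hΦc.add (continuous_const.mul hφc)
    exact hb0.measurable.comp (Complex.measurable_arg.comp hm)
  have hF2 : ∀ y, ‖F y‖ ≤ 2 := fun y => norm_bfun_le h1 hb _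
  have hm1' : ∀ y, ‖m y‖ ≤ 1 := fun y => (hm1 y).le
  obtain ⟨D, hD, hDv⟩ := smo_hasFDerivAt hk hm hm1' x
  obtain ⟨E, hE, hEv⟩ := smo_hasFDerivAt hk hFm hF2 x
  set M := smo k m x with hM
  set N := smo k F x with hN
  obtain ⟨G, hG, hGv⟩ := ext2_hasFDerivAt hd h1 M
  have hM1 : ‖M‖ ≤ 1 := smo_norm_le hk hm1' x
  have hN2 : ‖N‖ ≤ 2 := smo_norm_le hk hF2 x
  have kzero : ∀ t ∉ ball (0:ℂ) (2 * ε), k t = 0 := fun t ht => hk.zero_out ht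
  -- (a)
  have ha : ‖M - m x‖ ≤ K * s := by
    rw [hM, smo_sub hk hm hm1' x (m x)]
    have := ker_osc (E := ℂ) (p := 2 + α) (q := 1) (C := 1) hε one_pos (by linarith) hm hm1 x hK.le
      zero_le_one hk.bd kzero (F := fun t => m (x - t) - m x) (fun t => by simp)
    simpa using this
  -- (b)
  set e := M - m x with he
  have hbw0 : |inner ℝ (m x) e| ≤ K / 2 * s ^ 2 := by
    rw [he, hM, smo_sub hk hm hm1' x (m x)]
    exact ker_osc_inner hε (by linarith) hm hm1 x hK.le hk.smooth.continuous hk.cpt hk.bd kzero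
  have hMe : M = m x + e := by rw [he]; ring
  have he2 : ‖e‖ ^ 2 ≤ K ^ 2 * s ^ 2 := by
    rw [← mul_pow]; exact pow_le_pow_left₀ (norm_nonneg _) ha 2
  have hbw : |1 - ‖M‖ ^ 2| ≤ (K + K ^ 2) * s ^ 2 := by
    have h3 := norm_add_sq_real (m x) e
    rw [← hMe, hm1] at h3
    rw [abs_le] at hbw0 ⊢
    constructor <;> nlinarith [sq_nonneg ‖e‖]
  have hw1 : |1 - ‖M‖ ^ 2| ≤ 1 := by
    rw [abs_le]; constructor <;> nlinarith [norm_nonneg M]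
  -- (c)
  have hin : ∀ v : ℂ, M.re * (D v).re + M.im * (D v).im = inner ℝ M (D v) := by
    intro v; simp [Complex.inner]; ring
  have hDn : ∀ v, ‖D v‖ ≤ K / ε * ‖v‖ := by
    intro v
    rw [hDv]
    simpa using dsmo_norm_le hε hK hk hm1' x v
  have hEn : ∀ v, ‖E v‖ ≤ K / ε * ‖v‖ * 2 := by
    intro v
    rw [hEv]
    exact dsmo_norm_le hε hK hk hF2 x v
  have hc : ∀ v : ℂ, ‖v‖ = 1 → |inner ℝ M (D v)| ≤ K / ε * (1 + K) * s ^ 2 := by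
    intro v hv
    have hDs : D v = ∫ t, fderiv ℝ k t v • (m (x - t) - m x) := by
      rw [hDv, dsmo_sub hk hm hm1' x (m x) v]
    have hbd : ∀ t, |fderiv ℝ k t v| ≤ (K / ε) / areaV ε := by
      intro t; simpa [hv] using dker_bd hk v t
    have i1 : |inner ℝ (m x) (D v)| ≤ K / ε / 2 * s ^ 2 := by
      rw [hDs]
      exact ker_osc_inner hε (by linarith) hm hm1 x (by positivity) (dker_cont hk v).1 (dker_cont hk v).2
        hbd (dker_zero hk v)
    have i2 : ‖D v‖ ≤ K / ε * s := by
      rw [hDs]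
      have := ker_osc (E := ℂ) (p := 2 + α) (q := 1) (C := 1) hε one_pos (by linarith) hm hm1 x
        (by positivity : 0 ≤ K / ε) zero_le_one hbd (dker_zero hk v) (F := fun t => m (x - t) - m x)
        (fun t => by simp)
      simpa using this
    have i3 : |inner ℝ e (D v)| ≤ K * s * (K / ε * s) :=
      (abs_real_inner_le_norm _ _).trans (mul_le_mul ha i2 (norm_nonneg _) (by positivity))
    have hKe : 0 ≤ K / ε * s ^ 2 := by positivity
    calc |inner ℝ M (D v)| = |inner ℝ (m x) (D v) + inner ℝ e (D v)| := by
          rw [hMe, inner_add_left]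
      _ ≤ |inner ℝ (m x) (D v)| + |inner ℝ e (D v)| := abs_add_le _ _
      _ ≤ K / ε / 2 * s ^ 2 + K * s * (K / ε * s) := add_le_add i1 i3
      _ ≤ _ := by nlinarith
  -- (d)
  have hKα : K ^ α ≤ K + 1 := by
    calc K ^ α ≤ (K + 1) ^ α := Real.rpow_le_rpow hK.le (by linarith) hα0.le
      _ ≤ (K + 1) ^ (1:ℝ) := Real.rpow_le_rpow_of_exponent_le (by linarith) hα1.le
      _ = K + 1 := Real.rpow_one _
  have hFh : ∀ t, ‖F (x - t) - F x‖ ≤ 20 * ‖m (x - t) - m x‖ ^ α := fun t =>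
    bfun_holder hα hd hb hh _ _ (hm1 x)
  have hd1 : ‖bfun Φ φ' M - N‖ ≤ 20 * (2 * K + 1) * s ^ α := by
    have j1 : ‖N - F x‖ ≤ K * 20 * s ^ α := by
      rw [hN, smo_sub hk hFm hF2 x (F x)]
      exact ker_osc (E := ℂ) (p := 2 + α) hε hα0 (by linarith) hm hm1 x hK.le
        (by norm_num) hk.bd kzero hFh
    have j2 : ‖bfun Φ φ' M - F x‖ ≤ 20 * ((K + 1) * s ^ α) := by
      refine (bfun_holder hα hd hb hh M (m x) (hm1 x)).trans ?_
      have : ‖M - m x‖ ^ α ≤ (K + 1) * s ^ α := by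
        calc ‖M - m x‖ ^ α ≤ (K * s) ^ α := Real.rpow_le_rpow (norm_nonneg _) ha hα0.le
          _ = K ^ α * s ^ α := Real.mul_rpow hK.le hs0
          _ ≤ _ := by gcongr
      linarith
    calc ‖bfun Φ φ' M - N‖ = ‖(bfun Φ φ' M - F x) - (N - F x)‖ := by ring_nf
      _ ≤ ‖bfun Φ φ' M - F x‖ + ‖N - F x‖ := norm_sub_le _ _
      _ ≤ 20 * ((K + 1) * s ^ α) + K * 20 * s ^ α := add_le_add j2 j1
      _ = _ := by ring
  -- (e)
  have hEb : ∀ v : ℂ, ‖v‖ = 1 → ‖E v‖ ≤ K / ε * 20 * s ^ α := by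
    intro v hv
    rw [hEv, dsmo_sub hk hFm hF2 x (F x) v]
    exact ker_osc (E := ℂ) (p := 2 + α) hε hα0 (by linarith) hm hm1 x (by positivity : 0 ≤ K / ε)
        (by norm_num) (fun t => by simpa [hv] using dker_bd hk v t) (dker_zero hk v) hFh
  -- derivative
  have hnorm : HasFDerivAt (fun y => ((1 - ‖smo k m y‖ ^ 2 : ℝ) : ℂ))
      (Complex.ofRealCLM.comp (-((2 • innerSL ℝ M).comp D))) x := by
    apply Complex.ofRealCLM.hasFDerivAt.comp x
    exact (((hasStrictFDerivAt_norm_sq M).hasFDerivAt.comp x hD).const_sub 1)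
  have hY := (hG.comp x hD).add (hnorm.mul hE)
  refine ⟨_, hY, ?_⟩
  have hLv : ∀ v, (G.comp D + (((1 - ‖smo k m x‖ ^ 2 : ℝ) : ℂ) • E
      + (smo k F x) • (Complex.ofRealCLM.comp (-((2 • innerSL ℝ M).comp D))))) v
      = G (D v) + (((1 - ‖M‖ ^ 2 : ℝ) : ℂ) * E v
        + ((-2 * (M.re * (D v).re + M.im * (D v).im) : ℝ) : ℂ) * N) := by
    intro v
    rw [hin]
    simp [hM, hN]
    ring
  refine ⟨?_, ?_, ?_⟩
  · intro v
    rw [hLv, hGv, hin]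
    have k1 : |inner ℝ M (D v)| ≤ K / ε * ‖v‖ := by
      refine (abs_real_inner_le_norm _ _).trans ?_
      calc ‖M‖ * ‖D v‖ ≤ 1 * (K / ε * ‖v‖) := mul_le_mul hM1 (hDn v) (norm_nonneg _) zero_le_one
        _ = _ := one_mul _
    have k2 : |M.re * (D v).im - M.im * (D v).re| ≤ K / ε * ‖v‖ := by
      have : M.re * (D v).im - M.im * (D v).re = inner ℝ (Complex.I * M) (D v) := by
        simp [Complex.inner]; ring
      rw [this]
      refine (abs_real_inner_le_norm _ _).trans ?_
      rw [norm_mul, Complex.norm_I, one_mul]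
      calc ‖M‖ * ‖D v‖ ≤ 1 * (K / ε * ‖v‖) := mul_le_mul hM1 (hDn v) (norm_nonneg _) zero_le_one
        _ = _ := one_mul _
    set B := K / ε * ‖v‖ with hB
    have hB0 : 0 ≤ B := by positivity
    have t1 : ‖((2 * inner ℝ M (D v) : ℝ) : ℂ) * Φ (circ M.arg)‖ ≤ 2 * B := by
      rw [norm_mul, Complex.norm_real, Real.norm_eq_abs, abs_mul, abs_two]
      have := mul_le_mul k1 (h1 M.arg) (norm_nonneg _) hB0
      nlinarith
    have t2 : ‖((M.re * (D v).im - M.im * (D v).re : ℝ) : ℂ) * φ' M.arg‖ ≤ B := by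
      rw [norm_mul, Complex.norm_real, Real.norm_eq_abs]
      have := mul_le_mul k2 (hb M.arg) (norm_nonneg _) hB0
      nlinarith
    have t3 : ‖((1 - ‖M‖ ^ 2 : ℝ) : ℂ) * E v‖ ≤ 2 * B := by
      rw [norm_mul, Complex.norm_real, Real.norm_eq_abs]
      have := mul_le_mul hw1 (hEn v) (norm_nonneg _) zero_le_one
      linarith
    have t4 : ‖((-2 * inner ℝ M (D v) : ℝ) : ℂ) * N‖ ≤ 4 * B := by
      rw [norm_mul, Complex.norm_real, Real.norm_eq_abs, abs_mul, abs_neg, abs_two]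
      have := mul_le_mul k1 hN2 (norm_nonneg _) hB0
      linarith
    refine (norm_add_le _ _).trans ?_
    refine (add_le_add (norm_add_le _ _) (norm_add_le _ _)).trans ?_
    have : 9 * (K / ε) * ‖v‖ = 9 * B := by rw [hB]; ring
    linarith
  · intro hdiv
    rw [hLv, hLv, hGv, hGv]
    have htr : (D 1).re + (D Complex.I).im = 0 := by
      rw [hDv, hDv, dsmo_trace hk hm hm1, hdiv]
    have hcirc := norm_circ M.arg
    have hcirc2 : (circ M.arg).re ^ 2 + (circ M.arg).im ^ 2 = 1 := by
      have := Complex.sq_norm (circ M.arg)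
      rw [hcirc, Complex.normSq_apply] at this
      linarith
    have hMc := norm_mul_circ_arg M
    have hz1 : M.re = ‖M‖ * (circ M.arg).re := by
      conv_lhs => rw [← hMc]
      rw [Complex.re_ofReal_mul]
    have hz2 : M.im = ‖M‖ * (circ M.arg).im := by
      conv_lhs => rw [← hMc]
      rw [Complex.im_ofReal_mul]
    have hdt := hdot M.arg
    unfold dotR at hdt
    set c0 := circ M.arg with hc0
    set g := φ' M.arg with hg
    have hg1 : g.re = - (g.im * c0.re - g.re * c0.im) * c0.im := by
      linear_combination (-g.re) * hcirc2 + c0.re * hdt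
    have hg2 : g.im = (g.im * c0.re - g.re * c0.im) * c0.re := by
      linear_combination (-g.im) * hcirc2 + c0.im * hdt
    rw [alg_div M (Φ c0) g c0 N (D 1) (D Complex.I) (E 1) (E Complex.I) ‖M‖ _ _ hcirc2 hz1 hz2 hg1 hg2 htr]
    have hbe : Φ c0 + Complex.I / 2 * g = bfun Φ φ' M := rfl
    rw [hbe, hin, hin]
    set d := bfun Φ φ' M - N with hdd
    have c1 := hc 1 (by simp)
    have cI := hc Complex.I (by simp)
    have e1 := hEb 1 (by simp)
    have eI := hEb Complex.I (by simp)
    have r1 : |d.re| ≤ 20 * (2 * K + 1) * s ^ α := (Complex.abs_re_le_norm d).trans hd1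
    have r2 : |d.im| ≤ 20 * (2 * K + 1) * s ^ α := (Complex.abs_im_le_norm d).trans hd1
    have hsα : 0 ≤ s ^ α := by positivity
    have p1 := mul_le_mul r1 c1 (abs_nonneg _) (by positivity)
    have p2 := mul_le_mul r2 cI (abs_nonneg _) (by positivity)
    have q1 : |(E 1).re + (E Complex.I).im| ≤ 2 * (K / ε * 20 * s ^ α) := by
      refine (abs_add_le _ _).trans ?_
      have := (Complex.abs_re_le_norm (E 1)).trans e1
      have := (Complex.abs_im_le_norm (E Complex.I)).trans eI
      linarith
    have p3 := mul_le_mul hbw q1 (abs_nonneg _) (by positivity)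
    rw [← abs_mul] at p1 p2 p3
    have hsp : s ^ (2 + α) = s ^ 2 * s ^ α := by
      rw [Real.rpow_add' hs0 (by linarith), Real.rpow_two]
    have tri : |2 * (d.re * inner ℝ M (D 1) + d.im * inner ℝ M (D Complex.I))
        + (1 - ‖M‖ ^ 2) * ((E 1).re + (E Complex.I).im)|
        ≤ 2 * (|d.re * inner ℝ M (D 1)| + |d.im * inner ℝ M (D Complex.I)|)
          + |(1 - ‖M‖ ^ 2) * ((E 1).re + (E Complex.I).im)| := by
      refine (abs_add_le _ _).trans ?_
      gcongr
      rw [abs_mul, abs_two]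
      gcongr
      exact abs_add_le _ _
    refine tri.trans ?_
    set T := s ^ 2 * s ^ α / ε with hT
    have hT0 : 0 ≤ T := by positivity
    have p1' : |d.re * inner ℝ M (D 1)| ≤ 20 * (2 * K + 1) * (K * (1 + K)) * T :=
      p1.trans (le_of_eq (by rw [hT]; ring))
    have p2' : |d.im * inner ℝ M (D Complex.I)| ≤ 20 * (2 * K + 1) * (K * (1 + K)) * T :=
      p2.trans (le_of_eq (by rw [hT]; ring))
    have p3' : |(1 - ‖M‖ ^ 2) * ((E 1).re + (E Complex.I).im)| ≤ 40 * (K + K ^ 2) * K * T :=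
      p3.trans (le_of_eq (by rw [hT]; ring))
    have fin : 200 * (2 * K + 1) ^ 3 / ε * s ^ (2 + α) = 200 * (2 * K + 1) ^ 3 * T := by
      rw [hsp, hT]; ring
    rw [fin]
    have coef : 2 * (20 * (2 * K + 1) * (K * (1 + K)) + 20 * (2 * K + 1) * (K * (1 + K)))
        + 40 * (K + K ^ 2) * K ≤ 200 * (2 * K + 1) ^ 3 := by
      have h2 : 0 ≤ K ^ 2 := by positivity
      have h3 : 0 ≤ K ^ 3 := by positivity
      nlinarith
    have := mul_le_mul_of_nonneg_right coef hT0
    linarith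
  · have y1 := ext2_sub_le hd h1 hb M (m x) hM1 (hm1 x)
    have y2 : |1 - ‖M‖ ^ 2| ≤ 2 * ‖e‖ := by
      have h4 : 1 - ‖M‖ ≤ ‖e‖ := by
        rw [he, ← hm1 x, norm_sub_rev]; exact norm_sub_norm_le (m x) M
      rw [abs_of_nonneg (by nlinarith [norm_nonneg M])]
      nlinarith [norm_nonneg M]
    have e3 : Yfun k m Φ φ' x - Φ (m x) = (ext2 Φ M - Φ (m x)) + ((1 - ‖M‖ ^ 2 : ℝ) : ℂ) * N := by
      unfold Yfun; ring
    rw [e3]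
    refine (norm_add_le _ _).trans ?_
    rw [norm_mul, Complex.norm_real, Real.norm_eq_abs]
    have := mul_le_mul y2 hN2 (norm_nonneg _) (by positivity)
    linarith

end Pointwise2

/-! ### Part 4: integration -/

lemma clm_re_im {L : ℂ →L[ℝ] ℝ} (z : ℂ) : L z = z.re * L 1 + z.im * L Complex.I := by
  have : z = z.re • (1:ℂ) + z.im • Complex.I := by simp [Complex.re_add_im]
  conv_lhs => rw [this]
  rw [map_add, map_smul, map_smul]; simp

lemma ibp_div {ζ : ℂ → ℝ} (hζ : ContDiff ℝ 1 ζ) (hζc : HasCompactSupport ζ) {Y : ℂ → ℂ}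
    (hY : Differentiable ℝ Y) {C : ℝ} (hC : ∀ x v, ‖fderiv ℝ Y x v‖ ≤ C * ‖v‖) :
    ∫ x, fderiv ℝ ζ x (Y x)
      = - ∫ x, ζ x * ((fderiv ℝ Y x 1).re + (fderiv ℝ Y x Complex.I).im) := by
  have hζi : Integrable ζ := hζ.continuous.integrable_of_hasCompactSupport hζc
  have hYc := hY.continuous
  -- general real-valued statement
  have gen : ∀ (ℓ : ℂ →L[ℝ] ℝ) (v : ℂ),
      (∫ x, ℓ (Y x) * fderiv ℝ ζ x v = - ∫ x, ℓ (fderiv ℝ Y x v) * ζ x) ∧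
      Integrable (fun x => ℓ (Y x) * fderiv ℝ ζ x v) ∧
      Integrable (fun x => ℓ (fderiv ℝ Y x v) * ζ x) := by
    intro ℓ v
    have hfd : ∀ x, fderiv ℝ (fun x => ℓ (Y x)) x v = ℓ (fderiv ℝ Y x v) := by
      intro x
      have := (ℓ.hasFDerivAt.comp x (hY x).hasFDerivAt)
      have h2 : fderiv ℝ (fun x => ℓ (Y x)) x = ℓ.comp (fderiv ℝ Y x) := this.fderiv
      rw [h2]; rfl
    have hcv : Continuous fun x => fderiv ℝ ζ x v :=
      (hζ.continuous_fderiv (by simp)).clm_apply continuous_const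
    have hcs : HasCompactSupport fun x => fderiv ℝ ζ x v :=
      (hζc.fderiv (𝕜 := ℝ)).comp_left (g := fun L : ℂ →L[ℝ] ℝ => L v) (by simp)
    have i1 : Integrable (fun x => ℓ (Y x) * fderiv ℝ ζ x v) := by
      apply Continuous.integrable_of_hasCompactSupport
      · exact (ℓ.continuous.comp hYc).mul hcv
      · exact hcs.mul_left
    have i2 : Integrable (fun x => ℓ (fderiv ℝ Y x v) * ζ x) := by
      refine Integrable.bdd_mul (c := ‖ℓ‖ * (C * ‖v‖)) hζi ?_ (Eventually.of_forall fun x => ?_)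
      · exact (ℓ.continuous.measurable.comp (measurable_fderiv_apply_const ℝ Y v)).aestronglyMeasurable
      · exact (ℓ.le_opNorm _).trans (mul_le_mul_of_nonneg_left (hC x v) (norm_nonneg _))
    refine ⟨?_, i1, i2⟩
    have := integral_mul_fderiv_eq_neg_fderiv_mul_of_integrable (μ := (volume : Measure ℂ))
      (f := fun x => ℓ (Y x)) (g := ζ) (v := v) (by simpa only [hfd] using i2) i1
      (by
        apply Continuous.integrable_of_hasCompactSupport
        · exact (ℓ.continuous.comp hYc).mul hζ.continuous
        · exact hζc.mul_left)
      (fun x _ => ℓ.differentiableAt.comp x (hY x)) (fun x _ => hζ.differentiable (by simp) x)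
    simpa only [hfd] using this
  obtain ⟨a1, a2, a3⟩ := gen Complex.reCLM 1
  obtain ⟨b1, b2, b3⟩ := gen Complex.imCLM Complex.I
  simp only [Complex.reCLM_apply, Complex.imCLM_apply] at a1 a2 a3 b1 b2 b3
  calc ∫ x, fderiv ℝ ζ x (Y x)
      = ∫ x, ((Y x).re * fderiv ℝ ζ x 1 + (Y x).im * fderiv ℝ ζ x Complex.I) := by
        congr 1; funext x; exact clm_re_im _
    _ = - ((∫ x, (fderiv ℝ Y x 1).re * ζ x) + ∫ x, (fderiv ℝ Y x Complex.I).im * ζ x) := by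
        rw [integral_add a2 b2, a1, b1]; ring
    _ = _ := by
        rw [← integral_add a3 b3]
        congr 2; funext x; ring

section Global

variable {K ε α : ℝ} {k : ℂ → ℝ} {m : ℂ → ℂ} {Φ : ℂ → ℂ} {φ' : ℝ → ℂ}

lemma osc_rpow (hε : 0 < ε) {p : ℝ} (hp : 0 < p) (m : ℂ → ℂ) (x : ℂ) :
    osc ε p m x ^ p = av ε (fun t => ‖m (x - t) - m x‖ ^ p) := by
  unfold osc
  rw [← Real.rpow_mul (av_nonneg hε fun t => by positivity)]
  rw [one_div_mul_cancel hp.ne', Real.rpow_one]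

lemma osc_measurable (ε p : ℝ) (hm : Measurable m) : Measurable (osc ε p m) := by
  unfold osc av
  apply Measurable.pow_const
  apply Measurable.const_mul
  have h : Measurable (fun q : ℂ × ℂ => ‖m (q.1 - q.2) - m q.1‖ ^ p) := by
    apply Measurable.pow_const
    fun_prop
  exact (h.stronglyMeasurable.integral_prod_right' (ν := volume.restrict (ball (0:ℂ) (2 * ε)))).measurable

lemma osc_le_two (hε : 0 < ε) {p : ℝ} (hp : 0 < p) (hm1 : ∀ x, ‖m x‖ = 1) (x : ℂ) :
    osc ε p m x ≤ 2 := by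
  have hV := areaV_pos hε
  have h1 : av ε (fun t => ‖m (x - t) - m x‖ ^ p) ≤ 2 ^ p := by
    have := norm_setIntegral_le_of_norm_le_const (μ := (volume : Measure ℂ)) (s := ball (0:ℂ) (2 * ε)) (C := 2 ^ p)
      (f := fun t => ‖m (x - t) - m x‖ ^ p) measure_ball_lt_top (fun t _ => by
        rw [Real.norm_eq_abs, abs_of_nonneg (by positivity)]
        refine Real.rpow_le_rpow (norm_nonneg _) ?_ hp.le
        refine (norm_sub_le _ _).trans ?_
        rw [hm1, hm1]; norm_num)
    rw [Measure.real, volume_ball_eq hε, ENNReal.toReal_ofReal hV.le] at this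
    have h2 := (le_abs_self _).trans this
    unfold av
    rw [inv_mul_le_iff₀ hV]
    exact h2.trans (le_of_eq (mul_comm _ _))
  unfold osc
  calc _ ≤ ((2:ℝ) ^ p) ^ (1 / p) :=
        Real.rpow_le_rpow (av_nonneg hε fun t => by positivity) h1 (by positivity)
    _ = 2 := by rw [← Real.rpow_mul (by norm_num), mul_one_div_cancel hp.ne', Real.rpow_one]

lemma le_young {s δ α : ℝ} (hs : 0 ≤ s) (hδ : 0 < δ) (hα : 0 < α) :
    s ≤ δ + δ ^ (-(1 + α)) * s ^ (2 + α) := by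
  rcases le_total s δ with h | h
  · have : 0 ≤ δ ^ (-(1 + α)) * s ^ (2 + α) := by positivity
    linarith
  · have hs' : 0 < s := hδ.trans_le h
    have e : s ^ (2 + α) = s * s ^ (1 + α) := by
      rw [← Real.rpow_one_add' hs (by linarith)]; congr 1; ring
    have h1 : 1 ≤ δ ^ (-(1 + α)) * s ^ (1 + α) := by
      rw [Real.rpow_neg hδ.le, ← div_eq_inv_mul, one_le_div (by positivity)]
      exact Real.rpow_le_rpow hδ.le h (by linarith)
    rw [e]
    nlinarith

lemma main_est (hα : α ∈ Set.Ioo (0:ℝ) 1) (hK : 0 < K) (hε : 0 < ε) (hk : Ker K ε k)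
    (hm : Measurable m) (hm1 : ∀ x, ‖m x‖ = 1)
    (hd : ∀ θ : ℝ, HasDerivAt (fun t => Φ (circ t)) (φ' θ) θ)
    (hφc : Continuous φ')
    (hdot : ∀ θ : ℝ, dotR (φ' θ) (circ θ) = 0)
    (h1 : ∀ θ, ‖Φ (circ θ)‖ ≤ 1) (hb : ∀ θ, ‖φ' θ‖ ≤ 1)
    (hh : ∀ θ₁ θ₂ : ℝ, ‖φ' θ₁ - φ' θ₂‖ ≤ |θ₁ - θ₂| ^ α)
    {ζ : ℂ → ℝ} (hζ : ContDiff ℝ 1 ζ) (hζc : HasCompactSupport ζ) (hζ1 : ∀ x, |ζ x| ≤ 1)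
    {Z : ℝ} (hZ : ∀ x, ‖fderiv ℝ ζ x‖ ≤ Z)
    (hdiv : ∀ x ∈ tsupport ζ, (∫ t, fderiv ℝ k t (m (x - t))) = 0) {δ : ℝ} (hδ : 0 < δ) :
    |∫ x, fderiv ℝ ζ x (Φ (m x))| ≤
      200 * (2 * K + 1) ^ 3 / ε * (∫ x in tsupport ζ, osc ε (2 + α) m x ^ (2 + α))
      + Z * (10 * K) * (δ * volume.real (tsupport ζ)
        + δ ^ (-(1 + α)) * ∫ x in tsupport ζ, osc ε (2 + α) m x ^ (2 + α)) := by
  have hα0 := hα.1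
  have hp : 0 < 2 + α := by linarith
  set S := tsupport ζ with hS
  have hSc : IsCompact S := hζc
  have hSm : MeasurableSet S := hSc.measurableSet
  have hSv : volume S ≠ ⊤ := hSc.measure_lt_top.ne
  set s := osc ε (2 + α) m with hs
  have hZ0 : 0 ≤ Z := (norm_nonneg _).trans (hZ 0)
  choose L hL hLb hLd hLa using pt_est hα hK hε hk hm hm1 hd hφc hdot h1 hb hh
  set Y := Yfun k m Φ φ' with hYdef
  have hYd : Differentiable ℝ Y := fun x => (hL x).differentiableAt
  have hfd : ∀ x, fderiv ℝ Y x = L x := fun x => (hL x).fderiv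
  have hibp := ibp_div hζ hζc hYd (C := 9 * (K / ε)) (fun x v => by rw [hfd]; exact hLb x v)
  have hsint : IntegrableOn (fun x => s x ^ (2 + α)) S := by
    refine Measure.integrableOn_of_bounded (M := 2 ^ (2 + α)) hSv
      ((osc_measurable ε _ hm).pow_const _).aestronglyMeasurable (Eventually.of_forall fun x => ?_)
    rw [Real.norm_eq_abs, abs_of_nonneg (Real.rpow_nonneg (osc_nonneg hε _ _ _) _)]
    exact Real.rpow_le_rpow (osc_nonneg hε _ _ _) (osc_le_two hε hp hm1 x) hp.le
  set J := ∫ x in S, s x ^ (2 + α) with hJ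
  -- first term
  have T1 : |∫ x, fderiv ℝ ζ x (Y x)| ≤ 200 * (2 * K + 1) ^ 3 / ε * J := by
    rw [hibp, abs_neg, hJ, ← integral_const_mul, ← integral_indicator hSm, ← Real.norm_eq_abs]
    apply norm_integral_le_of_norm_le
    · rw [integrable_indicator_iff hSm]
      exact hsint.const_mul _
    · refine Eventually.of_forall fun x => ?_
      by_cases hx : x ∈ S
      · rw [indicator_of_mem hx, norm_mul, Real.norm_eq_abs, Real.norm_eq_abs, hfd]
        have := mul_le_mul (hζ1 x) (hLd x (hdiv x hx)) (abs_nonneg _) zero_le_one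
        rwa [one_mul] at this
      · rw [indicator_of_notMem hx, image_eq_zero_of_notMem_tsupport hx]; simp
  have hΦm : Measurable fun x => Φ (m x) := by
    have hΦc : Continuous fun t => Φ (circ t) :=
      continuous_iff_continuousAt.2 fun t => (hd t).continuousAt
    have e : (fun x => Φ (m x)) = fun x => (fun t => Φ (circ t)) (m x).arg := by
      funext x; simp only [circ_arg (hm1 x)]
    rw [e]
    exact hΦc.measurable.comp (Complex.measurable_arg.comp hm)
  have hΦ1 : ∀ x, ‖Φ (m x)‖ ≤ 1 := by
    intro x
    have := h1 (m x).arg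
    rwa [circ_arg (hm1 x)] at this
  have hζ' : ∀ x ∉ S, fderiv ℝ ζ x = 0 := fun x hx =>
    image_eq_zero_of_notMem_tsupport fun h => hx (tsupport_fderiv_subset ℝ h)
  have hdc : Continuous (fderiv ℝ ζ) := hζ.continuous_fderiv (by simp)
  have hI2 : Integrable fun x => fderiv ℝ ζ x (Y x) := by
    apply Continuous.integrable_of_hasCompactSupport
    · exact hdc.clm_apply hYd.continuous
    · apply HasCompactSupport.intro hSc
      intro x hx; rw [hζ' x hx]; simp
  have hI1 : Integrable fun x => fderiv ℝ ζ x (Φ (m x)) := by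
    have : IntegrableOn (fun x => fderiv ℝ ζ x (Φ (m x))) S := by
      refine Measure.integrableOn_of_bounded (M := Z) hSv ?_ (Eventually.of_forall fun x => ?_)
      · have : (fun x => fderiv ℝ ζ x (Φ (m x))) = fun x =>
            (Φ (m x)).re * fderiv ℝ ζ x 1 + (Φ (m x)).im * fderiv ℝ ζ x Complex.I := by
          funext x; exact clm_re_im _
        rw [this]
        have c1 : Measurable fun x => fderiv ℝ ζ x 1 := (hdc.clm_apply continuous_const).measurable
        have c2 : Measurable fun x => fderiv ℝ ζ x Complex.I := (hdc.clm_apply continuous_const).measurable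
        exact (((Complex.measurable_re.comp hΦm).mul c1).add
          ((Complex.measurable_im.comp hΦm).mul c2)).aestronglyMeasurable
      · refine ((fderiv ℝ ζ x).le_opNorm _).trans ?_
        have := mul_le_mul (hZ x) (hΦ1 x) (norm_nonneg _) hZ0
        rwa [mul_one] at this
    rwa [integrableOn_iff_integrable_of_support_subset] at this
    intro x hx
    by_contra h
    exact hx (by simp [hζ' x h])
  have T2 : |∫ x, (fderiv ℝ ζ x (Φ (m x)) - fderiv ℝ ζ x (Y x))| ≤
      Z * (10 * K) * (δ * volume.real S + δ ^ (-(1 + α)) * J) := by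
    have e : Z * (10 * K) * (δ * volume.real S + δ ^ (-(1 + α)) * J)
        = ∫ x, S.indicator (fun x => Z * (10 * K) * (δ + δ ^ (-(1 + α)) * s x ^ (2 + α))) x := by
      rw [integral_indicator hSm, integral_const_mul, integral_add, integral_const_mul, setIntegral_const]
      · rw [smul_eq_mul, mul_comm δ]
      · exact integrableOn_const hSv
      · exact hsint.const_mul _
    rw [e, ← Real.norm_eq_abs]
    apply norm_integral_le_of_norm_le
    · rw [integrable_indicator_iff hSm]
      exact ((integrableOn_const hSv).add (hsint.const_mul _)).const_mul _
    · refine Eventually.of_forall fun x => ?_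
      by_cases hx : x ∈ S
      · rw [indicator_of_mem hx, ← map_sub]
        refine ((fderiv ℝ ζ x).le_opNorm _).trans ?_
        rw [norm_sub_rev, mul_assoc]
        refine mul_le_mul (hZ x) ?_ (norm_nonneg _) hZ0
        refine (hLa x).trans ?_
        exact mul_le_mul_of_nonneg_left (le_young (osc_nonneg hε _ _ _) hδ hα0) (by positivity)
      · rw [indicator_of_notMem hx, hζ' x hx]; simp
  have split : ∫ x, fderiv ℝ ζ x (Φ (m x)) = (∫ x, fderiv ℝ ζ x (Y x))
      + ∫ x, (fderiv ℝ ζ x (Φ (m x)) - fderiv ℝ ζ x (Y x)) := by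
    rw [integral_sub hI1 hI2]; ring
  rw [split]
  exact (abs_add_le _ _).trans (add_le_add T1 T2)

end Global

/-! ### Part 5: conclusion -/

/-- The averaged increments on the right-hand side. -/
def rhsA (p : ℝ) (Ω U : Set ℂ) (m : ℂ → ℂ) (ε : ℝ) : ℝ≥0∞ :=
  (volume (Metric.ball (0:ℂ) (2*ε)))⁻¹ *
    ∫⁻ h in Metric.ball (0:ℂ) (2*ε),
      ∫⁻ x in U ∩ {x | x + h ∈ Ω}, (‖m (x+h) - m x‖₊ : ℝ≥0∞) ^ p

lemma lintegral_ball_neg (r : ℝ) (g : ℂ → ℝ≥0∞) :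
    ∫⁻ t in ball (0:ℂ) r, g (-t) = ∫⁻ t in ball (0:ℂ) r, g t := by
  rw [← lintegral_indicator measurableSet_ball, ← lintegral_indicator measurableSet_ball,
    ← lintegral_neg_eq_self]
  congr 1; funext t
  simp [indicator]

lemma J_le {ε p : ℝ} (hε : 0 < ε) (hp : 0 < p) {m : ℂ → ℂ} (hm : Measurable m)
    (hm1 : ∀ x, ‖m x‖ = 1) {S U Ω : Set ℂ} (hS : IsCompact S)
    (hSU : ∀ x ∈ S, ∀ h ∈ ball (0:ℂ) (2 * ε), x ∈ U ∧ x + h ∈ Ω) :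
    ENNReal.ofReal (∫ x in S, osc ε p m x ^ p) ≤ rhsA p Ω U m ε := by
  have hV := areaV_pos hε
  have hSv : volume S ≠ ⊤ := hS.measure_lt_top.ne
  have hbd : ∀ x y : ℂ, ‖m x - m y‖ ≤ 2 := fun x y => by
    refine (norm_sub_le _ _).trans ?_
    rw [hm1, hm1]; norm_num
  have hsint : IntegrableOn (fun x => osc ε p m x ^ p) S := by
    refine Measure.integrableOn_of_bounded (M := 2 ^ p) hSv
      ((osc_measurable ε _ hm).pow_const _).aestronglyMeasurable (Eventually.of_forall fun x => ?_)
    rw [Real.norm_eq_abs, abs_of_nonneg (Real.rpow_nonneg (osc_nonneg hε _ _ _) _)]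
    exact Real.rpow_le_rpow (osc_nonneg hε _ _ _) (osc_le_two hε hp hm1 x) hp.le
  rw [ofReal_integral_eq_lintegral_ofReal hsint
    (Eventually.of_forall fun x => Real.rpow_nonneg (osc_nonneg hε _ _ _) _)]
  have hpt : ∀ x, ENNReal.ofReal (osc ε p m x ^ p) = (volume (ball (0:ℂ) (2 * ε)))⁻¹ *
      ∫⁻ t in ball (0:ℂ) (2 * ε), (‖m (x - t) - m x‖₊ : ℝ≥0∞) ^ p := by
    intro x
    rw [osc_rpow hε hp]
    unfold av
    rw [ENNReal.ofReal_mul (by positivity), ENNReal.ofReal_inv_of_pos hV, volume_ball_eq hε]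
    congr 1
    rw [ofReal_integral_eq_lintegral_ofReal]
    · congr 1; funext t
      rw [← ENNReal.ofReal_rpow_of_nonneg (norm_nonneg _) hp.le]
      congr 1
      rw [ofReal_norm]; rfl
    · refine Measure.integrableOn_of_bounded (M := 2 ^ p) measure_ball_lt_top.ne ?_
        (Eventually.of_forall fun t => ?_)
      · exact ((by fun_prop : Measurable fun t => ‖m (x - t) - m x‖).pow_const p).aestronglyMeasurable
      · rw [Real.norm_eq_abs, abs_of_nonneg (by positivity)]
        exact Real.rpow_le_rpow (norm_nonneg _) (hbd _ _) hp.le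
    · exact Eventually.of_forall fun t => by positivity
  simp only [hpt]
  have hmeas : Measurable (fun q : ℂ × ℂ => (‖m (q.1 - q.2) - m q.1‖₊ : ℝ≥0∞) ^ p) := by
    apply Measurable.pow_const
    fun_prop
  rw [lintegral_const_mul _ (hmeas.lintegral_prod_right' (ν := volume.restrict (ball (0:ℂ) (2 * ε))))]
  unfold rhsA
  refine mul_le_mul' le_rfl ?_
  rw [lintegral_lintegral_swap hmeas.aemeasurable]
  have := lintegral_ball_neg (2 * ε) (fun h => ∫⁻ x in S, (‖m (x + h) - m x‖₊ : ℝ≥0∞) ^ p)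
  simp only [← sub_eq_add_neg] at this
  rw [this]
  apply setLIntegral_mono' measurableSet_ball
  intro h hh
  apply lintegral_mono_set
  intro x hx
  exact hSU x hx h hh

lemma div_smo {K ε : ℝ} {k : ℂ → ℝ} (hk : Ker K ε k) {Ω : Set ℂ} {m : ℂ → ℂ} (hdiv : DivFree Ω m) {x : ℂ}
    (hx : ∀ h ∈ ball (0:ℂ) (2 * ε), x + h ∈ Ω) : (∫ t, fderiv ℝ k t (m (x - t))) = 0 := by
  let η : ℂ → ℝ := fun y => k (x - y)
  have hηs : ContDiff ℝ (⊤ : ℕ∞) η := hk.smooth.comp (contDiff_const.sub contDiff_id)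
  have hηt : tsupport η ⊆ (fun y => x - y) ⁻¹' (tsupport k) := by
    apply closure_minimal
    · intro y hy; exact subset_tsupport _ hy
    · exact (isClosed_tsupport k).preimage (by fun_prop)
  have hηΩ : tsupport η ⊆ Ω := by
    intro y hy
    have h1 := hk.tsupp (hηt hy)
    have := hx (-(x - y)) (by rw [mem_ball_zero_iff, norm_neg]; simpa using h1)
    simpa using this
  have hηc : HasCompactSupport η := by
    have : HasCompactSupport (k ∘ (Homeomorph.subLeft x)) := hk.cpt.comp_homeomorph _
    exact this
  have h0 := hdiv η ⟨hηs, hηc, hηΩ⟩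
  have hfd : ∀ y v, fderiv ℝ η y v = - fderiv ℝ k (x - y) v := by
    intro y v
    have h1 : HasFDerivAt k (fderiv ℝ k (x - y)) (x - y) :=
      (hk.smooth.differentiable (by simp) _).hasFDerivAt
    have h2 : HasFDerivAt (fun y : ℂ => x - y) (-ContinuousLinearMap.id ℝ ℂ) y :=
      (hasFDerivAt_id y).const_sub x
    have h3 : HasFDerivAt η _ y := h1.comp y h2
    rw [h3.fderiv]; simp
  rw [setIntegral_eq_integral_of_forall_compl_eq_zero] at h0
  · simp only [hfd] at h0
    rw [integral_neg, neg_eq_zero] at h0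
    rw [← integral_sub_left_eq_self _ volume x]
    simpa using h0
  · intro y hy
    have : fderiv ℝ η y = 0 :=
      image_eq_zero_of_notMem_tsupport fun h => hy (hηΩ (tsupport_fderiv_subset ℝ h))
    rw [this]; simp

/-- The main theorem for globally defined unit fields. -/
lemma core_s6 {α K : ℝ} (hα : α ∈ Set.Ioo (0:ℝ) 1) (hK : 0 < K)
    (hker : ∀ ε : ℝ, 0 < ε → ∃ k : ℂ → ℝ, Ker K ε k)
    {Ω : Set ℂ} {m : ℂ → ℂ} (hm : Measurable m) (hm1 : ∀ x, ‖m x‖ = 1) (hdiv : DivFree Ω m)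
    {Φ : ℂ → ℂ} (hΦ : EntC1aBall α Φ) {U : Set ℂ} (hU : IsOpen U) (hUΩ : U ⊆ Ω)
    {ζ : ℂ → ℝ} (hζ : TestFun1 U ζ) (hζ1 : ∀ x, |ζ x| ≤ 1) :
    ENNReal.ofReal |∫ x in U, fderiv ℝ ζ x (Φ (m x))|
      ≤ ENNReal.ofReal (200 * (2 * K + 1) ^ 3) *
        Filter.liminf (fun ε : ℝ => (ENNReal.ofReal ε)⁻¹ * rhsA (2 + α) Ω U m ε) (𝓝[>] (0:ℝ)) := by
  obtain ⟨φ', ⟨hd, ⟨L, hLip⟩, hdot⟩, h1, hb, hh⟩ := hΦ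
  obtain ⟨hζs, hζc, hζU⟩ := hζ
  have hα0 := hα.1
  have hp : 0 < 2 + α := by linarith
  set C := 200 * (2 * K + 1) ^ 3 with hC
  have hC0 : 0 < C := by positivity
  set R : ℝ → ℝ≥0∞ := fun ε : ℝ => (ENNReal.ofReal ε)⁻¹ * rhsA (2 + α) Ω U m ε with hR
  have hζ' : ∀ x ∉ tsupport ζ, fderiv ℝ ζ x = 0 := fun x hx =>
    image_eq_zero_of_notMem_tsupport fun h => hx (tsupport_fderiv_subset ℝ h)
  rw [setIntegral_eq_integral_of_forall_compl_eq_zero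
    (fun x hx => by rw [hζ' x fun h => hx (hζU h)]; simp)]
  set I := |∫ x, fderiv ℝ ζ x (Φ (m x))| with hI
  rcases eq_or_ne (liminf R (𝓝[>] (0:ℝ))) ⊤ with htop | hfin
  · rw [htop, ENNReal.mul_top (by simpa using hC0)]
    exact le_top
  set l := (liminf R (𝓝[>] (0:ℝ))).toReal with hl
  have hl0 : 0 ≤ l := ENNReal.toReal_nonneg
  have hle : ENNReal.ofReal l = liminf R (𝓝[>] (0:ℝ)) := ENNReal.ofReal_toReal hfin
  obtain ⟨Z, hZ⟩ := (hζc.fderiv (𝕜 := ℝ)).exists_bound_of_continuous (hζs.continuous_fderiv (by simp))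
  have hZ0 : 0 ≤ Z := (norm_nonneg _).trans (hZ 0)
  obtain ⟨r, hr, hrU⟩ := hζc.isCompact.exists_thickening_subset_open hU hζU
  set v := volume.real (tsupport ζ) with hv
  -- estimate at scale ε
  have key : ∀ ε, 0 < ε → 2 * ε < r → ∀ η, 0 < η → R ε < ENNReal.ofReal (l + η) →
      I ≤ C * (l + η) + Z * (10 * K) * (η * v + η ^ (-(1 + α)) * (ε * (l + η))) := by
    intro ε hε hεr η hη hRη
    obtain ⟨k, hk⟩ := hker ε hε
    have hin : ∀ x ∈ tsupport ζ, ∀ h ∈ ball (0:ℂ) (2 * ε), x ∈ U ∧ x + h ∈ Ω := by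
      intro x hx h hh
      refine ⟨hζU hx, hUΩ (hrU ?_)⟩
      rw [mem_thickening_iff]
      refine ⟨x, hx, ?_⟩
      have : ‖h‖ < 2 * ε := by simpa using hh
      simpa using this.trans hεr
    have hest := main_est hα hK hε hk hm hm1 hd hLip.continuous hdot h1 hb hh hζs hζc hζ1 hZ
      (fun x hx => div_smo hk hdiv fun h hh => (hin x hx h hh).2) hη
    have hJ := J_le hε hp hm hm1 hζc.isCompact hin
    set J := ∫ x in tsupport ζ, osc ε (2 + α) m x ^ (2 + α) with hJdef
    have hJle : J ≤ ε * (l + η) := by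
      have h2 : rhsA (2 + α) Ω U m ε = ENNReal.ofReal ε * R ε := by
        rw [hR]
        simp only
        rw [← mul_assoc, ENNReal.mul_inv_cancel (by simpa using hε) ENNReal.ofReal_ne_top, one_mul]
      have h3 : ENNReal.ofReal J ≤ ENNReal.ofReal (ε * (l + η)) := by
        refine hJ.trans ?_
        rw [h2, ENNReal.ofReal_mul hε.le]
        gcongr
      exact (ENNReal.ofReal_le_ofReal_iff (by positivity)).1 h3
    refine hest.trans ?_
    have e1 : C / ε * J ≤ C * (l + η) := by
      calc C / ε * J ≤ C / ε * (ε * (l + η)) := by gcongr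
        _ = _ := by field_simp
    have e2 : 0 ≤ η ^ (-(1 + α)) := by positivity
    gcongr
  -- limit in ε
  have key2 : ∀ η, 0 < η → I ≤ C * (l + η) + Z * (10 * K) * (η * v) := by
    intro η hη
    have hfreq : ∃ᶠ ε in 𝓝[>] (0:ℝ), R ε < ENNReal.ofReal (l + η) := by
      apply frequently_lt_of_liminf_lt
      · isBoundedDefault
      · rw [← hle]
        exact (ENNReal.ofReal_lt_ofReal_iff (by positivity)).2 (by linarith)
    have hev : ∀ᶠ ε in 𝓝[>] (0:ℝ), 0 < ε ∧ 2 * ε < r := by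
      have : Ioo (0:ℝ) (r / 2) ∈ 𝓝[>] (0:ℝ) := Ioo_mem_nhdsGT (by positivity)
      filter_upwards [this] with ε h
      exact ⟨h.1, by linarith [h.2]⟩
    have hfr := (hfreq.and_eventually hev).mono fun ε h => key ε h.2.1 h.2.2 η hη h.1
    have htend : Tendsto (fun ε : ℝ => C * (l + η) + Z * (10 * K) * (η * v + η ^ (-(1 + α)) * (ε * (l + η))))
        (𝓝[>] (0:ℝ)) (𝓝 (C * (l + η) + Z * (10 * K) * (η * v))) := by
      have : Continuous (fun ε : ℝ => C * (l + η) + Z * (10 * K) * (η * v + η ^ (-(1 + α)) * (ε * (l + η)))) := by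
        fun_prop
      have h := (this.tendsto 0).mono_left (nhdsWithin_le_nhds (s := Ioi 0))
      simpa using h
    exact ge_of_tendsto_of_frequently htend hfr
  have key3 : I ≤ C * l := by
    have htend : Tendsto (fun η : ℝ => C * (l + η) + Z * (10 * K) * (η * v)) (𝓝[>] (0:ℝ)) (𝓝 (C * l)) := by
      have : Continuous (fun η : ℝ => C * (l + η) + Z * (10 * K) * (η * v)) := by fun_prop
      have h := (this.tendsto 0).mono_left (nhdsWithin_le_nhds (s := Ioi 0))
      simpa using h
    refine ge_of_tendsto htend ?_
    filter_upwards [self_mem_nhdsWithin] with η hη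
    exact key2 η hη
  rw [← hle, ← ENNReal.ofReal_mul hC0.le]
  exact ENNReal.ofReal_le_ofReal key3

theorem statement6 (α : ℝ) (hα : α ∈ Set.Ioo (0:ℝ) 1) :
    ∃ C : ℝ, 0 < C ∧
    ∀ (Ω : Set ℂ), IsOpen Ω → IsBounded Ω →
    ∀ m : ℂ → ℂ, AEStronglyMeasurable m (volume.restrict Ω) →
      (∀ᵐ x ∂(volume.restrict Ω), ‖m x‖ = 1) → DivFree Ω m →
      besovE Ω (2+α) (1/(2+α)) m < ⊤ →
    ∀ Φ : ℂ → ℂ, EntC1aBall α Φ →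
    ∀ U : Set ℂ, IsOpen U → U ⊆ Ω →
    ∀ ζ : ℂ → ℝ, TestFun1 U ζ → (∀ x, |ζ x| ≤ 1) →
      ENNReal.ofReal |∫ x in U, fderiv ℝ ζ x (Φ (m x))|
        ≤ ENNReal.ofReal C *
          Filter.liminf
            (fun ε : ℝ =>
              (ENNReal.ofReal ε)⁻¹ * ((volume (Metric.ball (0:ℂ) (2*ε)))⁻¹ *
                ∫⁻ h in Metric.ball (0:ℂ) (2*ε),
                  ∫⁻ x in U ∩ {x | x + h ∈ Ω}, (‖m (x+h) - m x‖₊ : ℝ≥0∞) ^ (2+α)))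
            (𝓝[>] (0:ℝ)) := by
  obtain ⟨K, hK, hker⟩ := exists_ker
  refine ⟨200 * (2 * K + 1) ^ 3, by positivity, ?_⟩
  intro Ω hΩ _ m hm hm1 hdiv _ Φ hΦ U hU hUΩ ζ hζ hζ1
  -- a globally defined measurable unit representative
  classical
  let m0 : ℂ → ℂ := hm.mk m
  have hm0 : Measurable m0 := hm.stronglyMeasurable_mk.measurable
  let m' : ℂ → ℂ := fun x => if ‖m0 x‖ = 1 then m0 x else 1
  have hm' : Measurable m' :=
    Measurable.ite (measurableSet_eq_fun hm0.norm measurable_const) hm0 measurable_const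
  have hm'1 : ∀ x, ‖m' x‖ = 1 := by
    intro x
    by_cases h : ‖m0 x‖ = 1
    · simp [m', h]
    · simp [m', h]
  have hae : ∀ᵐ x ∂(volume.restrict Ω), m x = m' x := by
    filter_upwards [hm.ae_eq_mk, hm1] with x hx h1
    have e : m0 x = m x := hx.symm
    simp [m', e, h1]
  have haeΩ : ∀ᵐ x ∂(volume : Measure ℂ), x ∈ Ω → m x = m' x :=
    (ae_restrict_iff' hΩ.measurableSet).1 hae
  have hdiv' : DivFree Ω m' := by
    intro η hη
    rw [← hdiv η hη]
    apply integral_congr_ae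
    filter_upwards [hae] with x hx
    rw [hx]
  have hcore := core_s6 hα hK hker hm' hm'1 hdiv' hΦ hU hUΩ hζ hζ1
  have e1 : ∫ x in U, fderiv ℝ ζ x (Φ (m x)) = ∫ x in U, fderiv ℝ ζ x (Φ (m' x)) := by
    apply integral_congr_ae
    filter_upwards [ae_restrict_of_ae_restrict_of_subset hUΩ hae] with x hx
    rw [hx]
  have e2 : ∀ h : ℂ, ∫⁻ x in U ∩ {x | x + h ∈ Ω}, (‖m (x+h) - m x‖₊ : ℝ≥0∞) ^ (2+α)
      = ∫⁻ x in U ∩ {x | x + h ∈ Ω}, (‖m' (x+h) - m' x‖₊ : ℝ≥0∞) ^ (2+α) := by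
    intro h
    have hset : MeasurableSet (U ∩ {x | x + h ∈ Ω}) :=
      (hU.inter (hΩ.preimage (by fun_prop : Continuous fun x : ℂ => x + h))).measurableSet
    have hsh : ∀ᵐ x ∂(volume : Measure ℂ), x + h ∈ Ω → m (x + h) = m' (x + h) :=
      (measurePreserving_add_right (volume : Measure ℂ) h).quasiMeasurePreserving.ae haeΩ
    apply setLIntegral_congr_fun_ae hset
    filter_upwards [haeΩ, hsh] with x hx1 hx2 hx
    rw [hx1 (hUΩ hx.1), hx2 hx.2]
  rw [e1]
  simp only [e2]
  exact hcore

end Eikonal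
end
end

section
/- Let Φ ∈ ENT, let η ∈ C_c²((0,∞);ℝ) with η(1) = 1, and define on ℝ²∖{0}: Φ̂(re^{iθ}) = η(r)Φ(e^{iθ}), λ(e^{iθ}) = (d/dθ)Φ(e^{iθ})·(i e^{iθ}), and Ψ(re^{iθ}) = (η(r)/(2r²)) λ(e^{iθ}) e^{iθ} − (η'(r)/(2r)) Φ(e^{iθ}). Then for every open Ω ⊂ ℝ² and every u ∈ C¹(Ω; ℝ²∖{0}) with div u = 0 on Ω, the identity div(Φ̂∘u) = (Ψ∘u)·∇(1 − |u|²) holds pointwise on Ω. -/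
open MeasureTheory Metric Filter Set Bornology
open scoped ENNReal NNReal Topology Real

noncomputable section

namespace Eikonal

/-! ## STATEMENT 7 -/


theorem statement7 (φ φ' : ℝ → ℂ) (hφd : ∀ θ, HasDerivAt φ (φ' θ) θ)
    (hLip : ∃ L : ℝ≥0, LipschitzWith L φ') (hper : ∀ θ, φ (θ + 2*π) = φ θ)
    (hent : ∀ θ, dotR (φ' θ) (circ θ) = 0)
    (η : ℝ → ℝ) (hη : ContDiff ℝ 2 η) (hηc : HasCompactSupport η)
    (hηsupp : tsupport η ⊆ Set.Ioi 0) (hη1 : η 1 = 1)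
    (Ω : Set ℂ) (hΩ : IsOpen Ω) (u : ℂ → ℂ) (hu : ContDiffOn ℝ 1 u Ω)
    (hu0 : ∀ x ∈ Ω, u x ≠ 0)
    (hdiv : ∀ x ∈ Ω, (fderiv ℝ u x 1).re + (fderiv ℝ u x Complex.I).im = 0) :
    ∀ x ∈ Ω,
      (fderiv ℝ (fun y => (η ‖u y‖) • φ (Complex.arg (u y))) x 1).re
        + (fderiv ℝ (fun y => (η ‖u y‖) • φ (Complex.arg (u y))) x Complex.I).im
      = fderiv ℝ (fun y => 1 - ‖u y‖^2) x
          ((η ‖u x‖ / (2 * ‖u x‖^2) * dotR (φ' (Complex.arg (u x)))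
              (Complex.I * circ (Complex.arg (u x)))) • circ (Complex.arg (u x))
            - (deriv η ‖u x‖ / (2 * ‖u x‖)) • φ (Complex.arg (u x))) := by
  intro x hx
  have hdu : HasFDerivAt u (fderiv ℝ u x) x :=
    ((hu.contDiffAt (hΩ.mem_nhds hx)).differentiableAt (by simp)).hasFDerivAt
  have hz : u x ≠ 0 := hu0 x hx
  have hr : (0:ℝ) < ‖u x‖ := norm_pos_iff.mpr hz
  have hd := hdiv x hx
  set D := fderiv ℝ u x with hD
  -- the squared norm
  have hsq := hdu.norm_sq
  -- the norm
  have hn : HasFDerivAt (fun y => ‖u y‖)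
      ((1 / (2 * ‖u x‖)) • (2 • (innerSL ℝ (u x)).comp D)) x := by
    have h := hsq.sqrt (by positivity)
    simpa [Real.sqrt_sq] using h
  -- the local angle
  have hlog : HasFDerivAt (fun y => Complex.log (u y / u x))
      ((u x)⁻¹ • D) x := by
    have h1 : HasFDerivAt (fun y => u y / u x) ((u x)⁻¹ • D) x := by
      simpa [div_eq_mul_inv] using hdu.mul_const ((u x)⁻¹)
    have h2 : HasDerivAt Complex.log 1 (u x / u x) := by
      have h := Complex.hasDerivAt_log (z := u x / u x) (by rw [div_self hz]; simp)
      simpa [div_self hz] using h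
    have h3 := h2.comp_hasFDerivAt_of_eq x h1 rfl
    rw [one_smul] at h3
    exact h3
  have hang : HasFDerivAt (fun y => Complex.arg (u x) + (Complex.log (u y / u x)).im)
      (Complex.imCLM.comp ((u x)⁻¹ • D)) x :=
    ((Complex.imCLM.hasFDerivAt (x := Complex.log (u x / u x))).comp x hlog).const_add _
  have hφ1 : HasFDerivAt (fun y => φ (Complex.arg (u x) + (Complex.log (u y / u x)).im))
      ((Complex.imCLM.comp ((u x)⁻¹ • D)).smulRight (φ' (Complex.arg (u x)))) x := by
    have h0 : HasDerivAt φ (φ' (Complex.arg (u x)))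
        (Complex.arg (u x) + (Complex.log (u x / u x)).im) := by
      simpa [div_self hz] using hφd (Complex.arg (u x))
    have h := h0.hasFDerivAt.comp x hang
    refine HasFDerivAt.congr_fderiv h ?_
    ext v
    simp
  have hφ2 : HasFDerivAt (fun y => φ (Complex.arg (u y)))
      ((Complex.imCLM.comp ((u x)⁻¹ • D)).smulRight (φ' (Complex.arg (u x)))) x := by
    refine hφ1.congr_of_eventuallyEq ?_
    filter_upwards [hΩ.mem_nhds hx] with y hy
    have hy0 := hu0 y hy
    have ha : ((Complex.arg (u y) : ℝ) : Real.Angle)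
        = ((Complex.arg (u x) + (Complex.log (u y / u x)).im : ℝ) : Real.Angle) := by
      rw [Complex.log_im, Real.Angle.coe_add,
        ← Complex.arg_mul_coe_angle hz (div_ne_zero hy0 hz), mul_div_cancel₀ _ hz]
    obtain ⟨k, hk⟩ := Real.Angle.angle_eq_iff_two_pi_dvd_sub.mp ha
    have hp : Function.Periodic φ (2*π) := hper
    have := hp.int_mul k (Complex.arg (u x) + (Complex.log (u y / u x)).im)
    rw [← this]
    congr 1
    linarith
  have hηd : HasFDerivAt (fun y => η ‖u y‖)
      (deriv η ‖u x‖ • ((1 / (2 * ‖u x‖)) • (2 • (innerSL ℝ (u x)).comp D))) x :=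
    ((hη.differentiable (by simp)) ‖u x‖).hasDerivAt.comp_hasFDerivAt x hn
  have hprod := hηd.fun_smul hφ2
  rw [hprod.fderiv, (hsq.const_sub 1).fderiv]
  have hlin : ∀ v : ℂ, D v = v.re • D 1 + v.im • D Complex.I := by
    intro v
    rw [← map_smul, ← map_smul, ← map_add]
    congr 1
    apply Complex.ext <;> simp
  have hzc : u x = ‖u x‖ • circ (Complex.arg (u x)) := by
    simp [circ, Complex.norm_mul_exp_arg_mul_I]
  have hc1 : (circ (Complex.arg (u x))).re ^ 2 + (circ (Complex.arg (u x))).im ^ 2 = 1 := by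
    simp [circ, Complex.exp_ofReal_mul_I_re, Complex.exp_ofReal_mul_I_im]
  have he := hent (Complex.arg (u x))
  have hzre : (u x).re = ‖u x‖ * (circ (Complex.arg (u x))).re := by
    conv_lhs => rw [hzc]
    simp
  have hzim : (u x).im = ‖u x‖ * (circ (Complex.arg (u x))).im := by
    conv_lhs => rw [hzc]
    simp
  have hns : Complex.normSq (u x) = ‖u x‖ ^ 2 := Complex.normSq_eq_norm_sq _
  simp only [FunLike.coe_add, Pi.add_apply,
    FunLike.coe_smul, Pi.smul_apply, ContinuousLinearMap.smulRight_apply,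
    neg_apply, ContinuousLinearMap.comp_apply, innerSL_apply_apply,
    Complex.imCLM_apply, Complex.inner]
  rw [hlin (_ - _)]
  simp only [dotR] at he ⊢
  simp only [Complex.add_re, Complex.add_im, Complex.sub_re, Complex.sub_im, Complex.smul_re,
    Complex.smul_im, smul_eq_mul, Complex.mul_re, Complex.mul_im, Complex.inv_re, Complex.inv_im,
    Complex.conj_re, Complex.conj_im, Complex.I_re, Complex.I_im, nsmul_eq_mul, hns, Nat.cast_ofNat]
  rw [hzre, hzim]
  generalize ‖u x‖ = r at *
  generalize η r = e at *
  generalize deriv η r = e' at *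
  generalize φ (Complex.arg (u x)) = f at *
  generalize φ' (Complex.arg (u x)) = f' at *
  generalize circ (Complex.arg (u x)) = c at *
  generalize D 1 = A at *
  generalize D Complex.I = B at *
  obtain ⟨l, hl⟩ : ∃ l : ℝ, l = f'.im * c.re - f'.re * c.im := ⟨_, rfl⟩
  have hf1 : f'.re = - l * c.im := by
    rw [hl]; linear_combination (-f'.re) * hc1 + c.re * he
  have hf2 : f'.im = l * c.re := by
    rw [hl]; linear_combination (-f'.im) * hc1 + c.im * he
  rw [hf1, hf2]
  have hr' : r ≠ 0 := hr.ne'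
  field_simp
  linear_combination (e * l * (c.re ^ 2 + c.im ^ 2)) * hd + (e * l * (c.re ^ 2 * A.re
    + c.re * c.im * (A.im + B.re) + c.im ^ 2 * B.im)) * hc1

end Eikonal
end
end

section
/- Let α ∈ (0,1) and δ ∈ (0, π/16). Let ψ_0 : ℝ → ℝ be the Lipschitz, 2π-periodic function that is odd, π-periodic, even with respect to π/4, and on [0, π/4] is given by ψ_0(t) = δ^{α−1} t for 0 ≤ t ≤ 2δ and ψ_0(t) = 2δ^α for 2δ < t ≤ π/4; for s̄ ∈ ℝ set ψ_{s̄} = ψ_0(· − s̄). Then for every interval I ⊂ ℝ and every right-continuous v ∈ BV(I;ℝ): |Dv|(E) ≤ δ^{1−α} |D(ψ_{s̄}∘v)|(E), where E = {t ∈ I : v(t−) ∈ [s̄−δ, s̄+δ] and v(t+) ∈ [s̄−δ, s̄+δ]}. -/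
open MeasureTheory Metric Filter Set Bornology
open scoped ENNReal NNReal Topology Real

noncomputable section

namespace Eikonal

/-! ## STATEMENT 15 -/


/-- Left limits exist for functions with a derivative measure. -/
theorem aux_left {I : Set ℝ} (hIo : IsOpen I) {v : ℝ → ℝ} {μ : MeasureTheory.SignedMeasure ℝ}
    (hμ : ∀ a ∈ I, ∀ b ∈ I, a ≤ b → v b - v a = μ (Set.Ioc a b)) {t : ℝ} (ht : t ∈ I) :
    Filter.Tendsto v (𝓝[<] t) (𝓝 (Function.leftLim v t)) := by
  apply tendsto_leftLim_of_tendsto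
  set p := μ.toJordanDecomposition.posPart with hp
  set n := μ.toJordanDecomposition.negPart with hn
  have h1 : Antitone (fun s => p.real (Set.Ioc s t)) := fun x y hxy =>
    measureReal_mono (Set.Ioc_subset_Ioc_left hxy)
  have h2 : Antitone (fun s => n.real (Set.Ioc s t)) := fun x y hxy =>
    measureReal_mono (Set.Ioc_subset_Ioc_left hxy)
  refine ⟨_, Tendsto.congr' ?_
    ((tendsto_const_nhds (x := v t)).sub ((h1.tendsto_leftLim t).sub (h2.tendsto_leftLim t)))⟩
  filter_upwards [self_mem_nhdsWithin, nhdsWithin_le_nhds (hIo.mem_nhds ht)] with s hs hsI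
  have := hμ s hsI t ht (le_of_lt hs)
  rw [μ.apply_eq_posPart_real_sub_negPart_real measurableSet_Ioc] at this
  simp only [hp, hn]
  linarith

/-- A signed measure vanishing on half-open subintervals of `Ioc a b`. -/
theorem aux_restrict {σ : MeasureTheory.SignedMeasure ℝ} {a b : ℝ}
    (h : ∀ x ∈ Set.Icc a b, ∀ y ∈ Set.Icc a b, x ≤ y → σ (Set.Ioc x y) = 0) :
    σ.toJordanDecomposition.posPart.restrict (Set.Ioc a b)
      = σ.toJordanDecomposition.negPart.restrict (Set.Ioc a b) := by
  apply Measure.ext_of_Ioc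
  intro x y hxy
  rw [Measure.restrict_apply measurableSet_Ioc, Measure.restrict_apply measurableSet_Ioc,
    Set.Ioc_inter_Ioc]
  rcases le_total (x ⊔ a) (y ⊓ b) with hle | hle
  · have h0 := h (x ⊔ a) ⟨le_sup_right, hle.trans inf_le_right⟩ (y ⊓ b)
      ⟨le_sup_right.trans hle, inf_le_right⟩ hle
    rw [σ.apply_eq_posPart_real_sub_negPart_real measurableSet_Ioc] at h0
    exact (measureReal_eq_measureReal_iff (measure_ne_top _ _) (measure_ne_top _ _)).1
      (sub_eq_zero.1 h0)
  · simp [Set.Ioc_eq_empty_of_le hle]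

theorem statement15 (α δ : ℝ) (hα : α ∈ Set.Ioo (0:ℝ) 1) (hδ : δ ∈ Set.Ioo 0 (π/16))
    (ψ₀ : ℝ → ℝ) (hLip : ∃ L : ℝ≥0, LipschitzWith L ψ₀)
    (hodd : ∀ t, ψ₀ (-t) = -ψ₀ t) (hper : ∀ t, ψ₀ (t + π) = ψ₀ t)
    (heven : ∀ t, ψ₀ (π/2 - t) = ψ₀ t)
    (hval1 : ∀ t ∈ Set.Icc 0 (2*δ), ψ₀ t = δ^(α-1) * t)
    (hval2 : ∀ t ∈ Set.Ioc (2*δ) (π/4), ψ₀ t = 2*δ^α)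
    (sb : ℝ) (I : Set ℝ) (hIo : IsOpen I) (hIc : I.OrdConnected)
    (v : ℝ → ℝ) (hrc : ∀ t ∈ I, Filter.Tendsto v (𝓝[>] t) (𝓝 (v t)))
    (μ μ' : MeasureTheory.SignedMeasure ℝ)
    (hμ : ∀ a ∈ I, ∀ b ∈ I, a ≤ b → v b - v a = μ (Set.Ioc a b))
    (hμsupp : μ.totalVariation Iᶜ = 0)
    (hμ' : ∀ a ∈ I, ∀ b ∈ I, a ≤ b → ψ₀ (v b - sb) - ψ₀ (v a - sb) = μ' (Set.Ioc a b))
    (hμ'supp : μ'.totalVariation Iᶜ = 0) :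
    μ.totalVariation
        {t ∈ I | Function.leftLim v t ∈ Set.Icc (sb - δ) (sb + δ) ∧
          Function.rightLim v t ∈ Set.Icc (sb - δ) (sb + δ)}
      ≤ ENNReal.ofReal (δ^(1-α)) *
        μ'.totalVariation
          {t ∈ I | Function.leftLim v t ∈ Set.Icc (sb - δ) (sb + δ) ∧
            Function.rightLim v t ∈ Set.Icc (sb - δ) (sb + δ)} := by
  have hδ0 : 0 < δ := hδ.1
  set c : ℝ := δ ^ (α - 1) with hc
  have hc0 : 0 < c := Real.rpow_pos_of_pos hδ0 _
  have hcinv : δ ^ (1 - α) * c = 1 := by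
    rw [hc, ← Real.rpow_add hδ0]; simp
  have hlin : ∀ u ∈ Set.Icc (-(2*δ)) (2*δ), ψ₀ u = c * u := by
    intro u hu
    rcases le_total 0 u with h | h
    · exact hval1 u ⟨h, hu.2⟩
    · have h1 := hval1 (-u) ⟨by linarith, by linarith [hu.1]⟩
      rw [hodd] at h1
      linarith
  set E := {t ∈ I | Function.leftLim v t ∈ Set.Icc (sb - δ) (sb + δ) ∧
          Function.rightLim v t ∈ Set.Icc (sb - δ) (sb + δ)} with hE
  -- local neighbourhoods
  have hloc : ∀ t ∈ E, ∃ r > 0, ∀ s ∈ Set.Icc (t - r) (t + r),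
      s ∈ I ∧ v s ∈ Set.Icc (sb - 2*δ) (sb + 2*δ) := by
    rintro t ⟨htI, hl, hr⟩
    rw [rightLim_eq_of_tendsto (hrc t htI)] at hr
    have hnh : ∀ x ∈ Set.Icc (sb - δ) (sb + δ), Set.Icc (sb - 2*δ) (sb + 2*δ) ∈ 𝓝 x := by
      intro x hx
      exact Icc_mem_nhds (by linarith [hx.1]) (by linarith [hx.2])
    have e1 : ∀ᶠ s in 𝓝[<] t, v s ∈ Set.Icc (sb - 2*δ) (sb + 2*δ) :=
      aux_left hIo hμ htI (hnh _ hl)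
    have e2 : ∀ᶠ s in 𝓝[>] t, v s ∈ Set.Icc (sb - 2*δ) (sb + 2*δ) := hrc t htI (hnh _ hr)
    have e3 : ∀ᶠ s in 𝓝 t, v s ∈ Set.Icc (sb - 2*δ) (sb + 2*δ) := by
      rw [← nhdsNE_sup_pure, ← Iio_union_Ioi, nhdsWithin_union]
      refine eventually_sup.2 ⟨eventually_sup.2 ⟨e1, e2⟩, ?_⟩
      exact eventually_pure.2 (mem_of_mem_nhds (hnh _ hr))
    obtain ⟨r, hr0, hrs⟩ := Metric.nhds_basis_closedBall.eventually_iff.1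
      ((hIo.eventually_mem htI).and e3)
    refine ⟨r, hr0, fun s hs => hrs ?_⟩
    rwa [Real.closedBall_eq_Icc]
  choose! r hr0 hr using hloc
  obtain ⟨T, hTE, hTc, hcov⟩ := TopologicalSpace.countable_cover_nhdsWithin
    (f := fun t => Set.Ioc (t - r t) (t + r t)) (s := E) (fun t ht => nhdsWithin_le_nhds
      (Ioc_mem_nhds (by linarith [hr0 t ht]) (by linarith [hr0 t ht])))
  set W := ⋃ t ∈ T, Set.Ioc (t - r t) (t + r t) with hW
  have hWm : MeasurableSet W := MeasurableSet.biUnion hTc fun _ _ => measurableSet_Ioc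
  set σ : MeasureTheory.SignedMeasure ℝ := μ' - c • μ with hσ
  have hσW : σ.toJordanDecomposition.posPart.restrict W
      = σ.toJordanDecomposition.negPart.restrict W := by
    rw [hW, Measure.restrict_biUnion_congr hTc]
    intro t ht
    apply aux_restrict
    intro x hx y hy hxy
    have hx' := hr t (hTE ht) x hx
    have hy' := hr t (hTE ht) y hy
    rw [hσ, VectorMeasure.sub_apply, VectorMeasure.smul_apply, ← hμ x hx'.1 y hy'.1 hxy,
      ← hμ' x hx'.1 y hy'.1 hxy, hlin _ ⟨by linarith [hy'.2.1], by linarith [hy'.2.2]⟩,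
      hlin _ ⟨by linarith [hx'.2.1], by linarith [hx'.2.2]⟩, smul_eq_mul]
    ring
  have hkey : ∀ A, MeasurableSet A → A ⊆ W → μ A = δ ^ (1 - α) * μ' A := by
    intro A hA hAW
    have h0 : σ A = 0 := by
      rw [σ.apply_eq_posPart_real_sub_negPart_real hA, measureReal_def, measureReal_def,
        ← Measure.restrict_eq_self _ hAW, hσW, Measure.restrict_eq_self _ hAW, sub_self]
    rw [hσ, VectorMeasure.sub_apply, VectorMeasure.smul_apply, smul_eq_mul, sub_eq_zero] at h0
    rw [h0, ← mul_assoc, hcinv, one_mul]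
  have hle : μ.totalVariation ≤ ENNReal.ofReal (δ ^ (1 - α)) • μ'.totalVariation.restrict W
      + μ.totalVariation.restrict Wᶜ := by
    conv_lhs => rw [SignedMeasure.totalVariation_eq_variation]
    apply VectorMeasure.variation_le_of_forall_enorm_le
    intro A hA
    have hsplit : μ A = μ (A ∩ W) + μ (A ∩ Wᶜ) := by
      rw [← VectorMeasure.of_union (by
        exact Set.disjoint_left.2 fun x hx hx' => hx'.2 hx.2) (hA.inter hWm)
        (hA.inter hWm.compl), Set.inter_union_compl]
    rw [hsplit, Measure.add_apply, Measure.smul_apply, Measure.restrict_apply hA,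
      Measure.restrict_apply hA, smul_eq_mul]
    refine (enorm_add_le _ _).trans (add_le_add ?_ (SignedMeasure.enorm_le_totalVariation _ _))
    rw [hkey _ (hA.inter hWm) Set.inter_subset_right, enorm_mul,
      Real.enorm_of_nonneg (Real.rpow_nonneg hδ0.le _)]
    gcongr
    exact SignedMeasure.enorm_le_totalVariation _ _
  refine (hle E).trans ?_
  rw [Measure.add_apply, Measure.smul_apply, Measure.restrict_eq_self _ hcov,
    Measure.restrict_apply' hWm.compl, smul_eq_mul]
  have : E ∩ Wᶜ = ∅ := by
    rw [← Set.sdiff_eq, Set.sdiff_eq_empty]; exact hcov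
  simp [this]

end Eikonal
end
end
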